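/- arXiv:math/0502270 — 2 statements merged into one kernel-verified Lean document; each statement's English description precedes it below -/
import Mathlib

section
/- Let (W,S) be a Coxeter system satisfying: (0) for all s,t ∈ S with m(s,t) even, m(s,t) = 2; (1) for all s ≠ t ∈ S with m(s,t) odd, {s,t} is a maximal spherical subset of S; (2) there is no three-element subset {s,t,u} ⊆ S such that m(s,t) and m(t,u) are both odd; (3) for all s ≠ t ∈ S with m(s,t) odd, the number of maximal spherical subsets of S intersecting {s,t} is at most two. Then the Coxeter group W is rigid: for every Coxeter generating set S' for W, there exists a bijection ψ : S → S' such that m(s,t) = m'(ψ(s),ψ(t)) for all s,t ∈ S, where m' denotes orders with respect to the system (W,S'). -/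
/-!
The geometric representation on `V = ⨁ ℝ αᵢ` and the Tits cone show that a finite subgroup of `W` is
conjugate into a spherical parabolic subgroup, and that distinct maximal spherical parabolic
subgroups are not conjugate. So conjugacy of parabolic subgroups matches the maximal spherical
subsets of `S` with those of any other Coxeter generating set `S'`.

The homomorphisms `W → {±1}` are the sign functions on odd classes, the components of the graph of
odd exponents. Counting those that are trivial on a prescribed family of maximal spherical parabolic
subgroups computes, for `S` and for `S'`, the number of odd classes whose incidence set lies in a
given family. By Möbius inversion the odd classes of `S` and `S'` are matched compatibly with the
incidence of classes and maximal spherical subsets.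

Conditions (0)-(2) make every maximal spherical subset either commuting or an odd pair `{s, t}`, a
property that the conjugacy detects; so odd classes have one or two elements, equally many on
both sides. By (3) at most one commuting maximal spherical subset meets the class `{s, t}` of an odd
pair, and it contains one of `s`, `t`. Choosing `ψ` to respect classes and these marked elements
makes it preserve membership in maximal spherical subsets. As `m(s, t)` is finite exactly when `s`
and `t` lie in a common one, and matched odd pairs generate conjugate dihedral groups, `ψ` preserves
the exponents.
-/

/-- The standard parabolic subgroup `W_T` of a Coxeter system, generated by the
simple reflections indexed by `T`. -/
def CoxeterSystem.parabolic {B W : Type*} [Group W] {M : CoxeterMatrix B}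
    (cs : CoxeterSystem M W) (T : Set B) : Subgroup W :=
  Subgroup.closure (cs.simple '' T)

/-- `T` is a spherical subset: the parabolic subgroup `W_T` is finite. -/
def CoxeterSystem.IsSpherical {B W : Type*} [Group W] {M : CoxeterMatrix B}
    (cs : CoxeterSystem M W) (T : Set B) : Prop :=
  Finite (cs.parabolic T)

/-- `T` is a maximal spherical subset: spherical and maximal under inclusion
among spherical subsets. -/
def CoxeterSystem.IsMaxSpherical {B W : Type*} [Group W] {M : CoxeterMatrix B}
    (cs : CoxeterSystem M W) (T : Set B) : Prop :=
  cs.IsSpherical T ∧ ∀ U : Set B, cs.IsSpherical U → T ⊆ U → U = T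

/-- The conjugate subgroup `g H g⁻¹`. -/
def conjSubgroup {G : Type*} [Group G] (g : G) (H : Subgroup G) : Subgroup G :=
  Subgroup.map (MulAut.conj g).toMonoidHom H

namespace CoxeterRigidity

open CoxeterSystem Module Real
open Polynomial.Chebyshev (S)

section TitsForm

variable {B : Type*} (M : CoxeterMatrix B)

/-- The Tits form on the space `B →₀ ℝ` spanned by the simple roots: `⟨αᵢ, αⱼ⟩ = -cos (π / M i j)`.
For `M i j = 0` (infinite order) the junk value `π / 0 = 0` gives the customary `-1`. -/
noncomputable def form : LinearMap.BilinForm ℝ (B →₀ ℝ) :=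
  Finsupp.linearCombination ℝ fun i => Finsupp.linearCombination ℝ fun j => -cos (π / M i j)

/-- The simple root `αᵢ`, a standard basis vector of `B →₀ ℝ`. -/
noncomputable def simpleRoot (i : B) : B →₀ ℝ := Finsupp.single i 1

lemma simpleRoot_apply_self (i : B) : simpleRoot i i = 1 := by simp [simpleRoot]

lemma simpleRoot_apply_of_ne {i j : B} (h : i ≠ j) : simpleRoot i j = 0 :=
  Finsupp.single_eq_of_ne' h

lemma simpleRoot_nonneg (i : B) : 0 ≤ simpleRoot i := Finsupp.single_nonneg.2 zero_le_one

lemma simpleRoot_ne_zero (i : B) : simpleRoot i ≠ 0 := by simp [simpleRoot]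

lemma form_simpleRoot (i j : B) : form M (simpleRoot i) (simpleRoot j) = -cos (π / M i j) := by
  simp [form, simpleRoot]

lemma form_comm (u v : B →₀ ℝ) : form M u v = form M v u := by
  have h : form M = (form M).flip := by
    ext i j
    simp [form, M.symmetric i j]
  exact DFunLike.congr_fun (DFunLike.congr_fun h u) v

lemma form_simpleRoot_self (i : B) : form M (simpleRoot i) (simpleRoot i) = 1 := by
  simp [form_simpleRoot]

/-- The simple reflection `v ↦ v - 2⟨αᵢ, v⟩ αᵢ` of the Tits form. -/
noncomputable def simpleReflection (i : B) : Module.End ℝ (B →₀ ℝ) :=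
  preReflection (simpleRoot i) ((2 : ℝ) • form M (simpleRoot i))

lemma simpleReflection_apply (i : B) (v : B →₀ ℝ) :
    simpleReflection M i v = v - (2 * form M (simpleRoot i) v) • simpleRoot i := by
  simp [simpleReflection, preReflection_apply]

lemma simpleReflection_simpleRoot (i : B) :
    simpleReflection M i (simpleRoot i) = -simpleRoot i :=
  preReflection_apply_self (by simp [form_simpleRoot_self])

lemma simpleReflection_mul_self (i : B) : simpleReflection M i * simpleReflection M i = 1 :=
  LinearMap.ext fun v => by
    rw [Module.End.mul_apply, simpleReflection_apply _ _ v, map_sub, map_smul,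
      simpleReflection_simpleRoot, simpleReflection_apply]
    module

lemma form_simpleReflection (i : B) (u v : B →₀ ℝ) :
    form M (simpleReflection M i u) (simpleReflection M i v) = form M u v := by
  have hu := form_comm M u (simpleRoot i)
  simp only [simpleReflection_apply, map_sub, map_smul, LinearMap.sub_apply, LinearMap.smul_apply,
    smul_eq_mul, form_simpleRoot_self, hu]
  ring

end TitsForm

section DihedralCoeff

lemma sin_pi_div_pos {m : ℕ} (hm : 2 ≤ m) : 0 < sin (π / m) :=
  sin_pos_of_pos_of_lt_pi (by positivity) (div_lt_self pi_pos (by exact_mod_cast hm))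

/-- The coefficient `sin (k π / m) / sin (π / m)` of roots in the dihedral root system of order
`2 m`, written as a Chebyshev polynomial in order that it is also correct in the limit `m = ∞`,
which is encoded as `m = 0`. -/
noncomputable def dihedralCoeff (m k : ℕ) : ℝ := (S ℝ (k - 1)).eval (2 * cos (π / m))

lemma dihedralCoeff_one (m : ℕ) : dihedralCoeff m 1 = 1 := by simp [dihedralCoeff]

lemma dihedralCoeff_zero_right (m : ℕ) : dihedralCoeff m 0 = 0 := by simp [dihedralCoeff]

lemma dihedralCoeff_zero_left (k : ℕ) : dihedralCoeff 0 k = k := by simp [dihedralCoeff]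

lemma dihedralCoeff_add_two (m k : ℕ) :
    dihedralCoeff m (k + 2) = 2 * cos (π / m) * dihedralCoeff m (k + 1) - dihedralCoeff m k := by
  have h := Polynomial.Chebyshev.S_add_two ℝ (k - 1 : ℤ)
  simp only [dihedralCoeff]
  push_cast
  rw [show (k + 2 - 1 : ℤ) = k - 1 + 2 by ring, h, show (k + 1 - 1 : ℤ) = k - 1 + 1 by ring]
  simp

lemma dihedralCoeff_mul_sin (m k : ℕ) : dihedralCoeff m k * sin (π / m) = sin (k * (π / m)) := by
  have h := Polynomial.Chebyshev.S_two_mul_real_cos (π / m) (k - 1)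
  rwa [Int.cast_sub, Int.cast_natCast, Int.cast_one, sub_add_cancel] at h

lemma dihedralCoeff_nonneg {m k : ℕ} (hm : m ≠ 1) (hk : m ≠ 0 → k ≤ m) :
    0 ≤ dihedralCoeff m k := by
  rcases Nat.eq_zero_or_pos m with rfl | h0
  · simp [dihedralCoeff_zero_left]
  have hsin : 0 ≤ sin (k * (π / m)) := by
    refine sin_nonneg_of_nonneg_of_le_pi (by positivity) ?_
    rw [mul_div_left_comm]
    exact mul_le_of_le_one_right pi_pos.le
      (div_le_one_of_le₀ (by exact_mod_cast hk h0.ne') (by positivity))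
  rw [← dihedralCoeff_mul_sin] at hsin
  exact nonneg_of_mul_nonneg_left hsin (sin_pi_div_pos (by omega))

lemma cos_two_mul_pi_div_eq_one_iff {m : ℕ} (hm : m ≠ 0) (k : ℕ) :
    cos ((2 * k : ℕ) * (π / m)) = 1 ↔ m ∣ k := by
  have hm' : (m : ℝ) ≠ 0 := by exact_mod_cast hm
  have key (n : ℤ) : n * (2 * π) = (2 * k : ℕ) * (π / m) ↔ (k : ℤ) = m * n := by
    have h : n * (2 * π) = (2 * k : ℕ) * (π / m) ↔ (k : ℝ) = m * n := by
      have := pi_ne_zero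
      push_cast
      field_simp
      exact eq_comm
    exact_mod_cast h
  simp_rw [cos_eq_one_iff, key, ← Int.natCast_dvd_natCast]
  rfl

lemma dihedralCoeff_eq_one_and_eq_zero_iff {m : ℕ} (hm : m ≠ 1) (k : ℕ) :
    dihedralCoeff m (2 * k + 1) = 1 ∧ dihedralCoeff m (2 * k) = 0 ↔ m ∣ k := by
  rcases Nat.eq_zero_or_pos m with rfl | h0
  · simp [dihedralCoeff_zero_left]
  have hsin : sin (π / m) ≠ 0 := (sin_pi_div_pos (by omega)).ne'
  rw [← cos_two_mul_pi_div_eq_one_iff h0.ne', ← mul_left_inj' hsin, ← mul_left_inj' hsin (b := 0),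
    dihedralCoeff_mul_sin, dihedralCoeff_mul_sin, one_mul, zero_mul,
    Nat.cast_succ, add_one_mul, sin_add]
  constructor
  · rintro ⟨h, h'⟩
    rw [h', zero_mul, zero_add] at h
    exact mul_right_cancel₀ hsin (h.trans (one_mul _).symm)
  · intro h
    have h' : sin ((2 * k : ℕ) * (π / m)) = 0 := sin_eq_zero_iff_cos_eq.2 (Or.inl h)
    rw [h, h']
    simp

end DihedralCoeff

section Relations

variable {B : Type*} (M : CoxeterMatrix B)

lemma simpleReflection_mul_pow_simpleRoot (i j : B) (k : ℕ) :
    ((simpleReflection M i * simpleReflection M j) ^ k) (simpleRoot i) =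
      dihedralCoeff (M i j) (2 * k + 1) • simpleRoot i +
        dihedralCoeff (M i j) (2 * k) • simpleRoot j := by
  induction k with
  | zero => simp [dihedralCoeff_one, dihedralCoeff_zero_right]
  | succ k ih =>
    rw [pow_succ', Module.End.mul_apply, Module.End.mul_apply, ih, Nat.mul_succ,
      show 2 * k + 2 + 1 = 2 * k + 1 + 2 by ring, dihedralCoeff_add_two _ (2 * k + 1),
      dihedralCoeff_add_two _ (2 * k)]
    simp only [map_add, map_sub, map_smul, simpleReflection_apply, form_simpleRoot,
      M.symmetric j i, M.diagonal, Nat.cast_one, div_one, cos_pi]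
    module

lemma simpleReflection_mul_pow_simpleRoot_left {i j : B} (hij : i ≠ j) :
    ((simpleReflection M i * simpleReflection M j) ^ M i j) (simpleRoot i) = simpleRoot i := by
  obtain ⟨h₁, h₀⟩ := (dihedralCoeff_eq_one_and_eq_zero_iff (M.off_diagonal i j hij) _).2 dvd_rfl
  rw [simpleReflection_mul_pow_simpleRoot, h₁, h₀, one_smul, zero_smul, add_zero]

lemma simpleReflection_mul_pow_mul_pow (i j : B) (k : ℕ) :
    (simpleReflection M i * simpleReflection M j) ^ k *
      (simpleReflection M j * simpleReflection M i) ^ k = 1 := by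
  have h (i j : B) : simpleReflection M i * simpleReflection M j *
      (simpleReflection M j * simpleReflection M i) = 1 := by
    rw [mul_assoc, ← mul_assoc (simpleReflection M j), simpleReflection_mul_self, one_mul,
      simpleReflection_mul_self]
  have hcomm : Commute (simpleReflection M i * simpleReflection M j)
      (simpleReflection M j * simpleReflection M i) := (h i j).trans (h j i).symm
  rw [← hcomm.mul_pow, h, one_pow]

lemma simpleReflection_mul_pow_simpleRoot_right {i j : B} (hij : i ≠ j) :
    ((simpleReflection M i * simpleReflection M j) ^ M i j) (simpleRoot j) = simpleRoot j := by
  have h := simpleReflection_mul_pow_simpleRoot_left M hij.symm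
  rw [M.symmetric j i] at h
  rw [← h, ← Module.End.mul_apply, simpleReflection_mul_pow_mul_pow, h, Module.End.one_apply]

lemma simpleReflection_mul_pow_sub_mem_span (i j : B) (k : ℕ) (v : B →₀ ℝ) :
    ((simpleReflection M i * simpleReflection M j) ^ k) v - v ∈
      Submodule.span ℝ {simpleRoot i, simpleRoot j} := by
  induction k with
  | zero => simp
  | succ k ih =>
    have hi : simpleRoot i ∈ Submodule.span ℝ {simpleRoot i, simpleRoot j} :=
      Submodule.subset_span (by simp)
    have hj : simpleRoot j ∈ Submodule.span ℝ {simpleRoot i, simpleRoot j} :=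
      Submodule.subset_span (by simp)
    rw [pow_succ', Module.End.mul_apply, Module.End.mul_apply, simpleReflection_apply,
      simpleReflection_apply, sub_right_comm, sub_right_comm _ _ v]
    exact sub_mem (sub_mem ih (Submodule.smul_mem _ _ hj)) (Submodule.smul_mem _ _ hi)

lemma form_simpleReflection_mul_pow (i j : B) (k : ℕ) (u v : B →₀ ℝ) :
    form M (((simpleReflection M i * simpleReflection M j) ^ k) u)
      (((simpleReflection M i * simpleReflection M j) ^ k) v) = form M u v := by
  induction k with
  | zero => simp
  | succ k ih => simp_rw [pow_succ', Module.End.mul_apply, form_simpleReflection, ih]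

lemma form_simpleRoot_sq_ne_one {i j : B} (hij : i ≠ j) (h0 : M i j ≠ 0) :
    form M (simpleRoot i) (simpleRoot j) ^ 2 ≠ 1 := by
  have h1 := M.off_diagonal i j hij
  have hsin := sin_pi_div_pos (show 2 ≤ M i j by omega)
  rw [form_simpleRoot, neg_sq, cos_sq']
  exact (sub_lt_self 1 (by positivity)).ne

lemma eq_zero_of_mem_span_of_form_eq_zero {i j : B}
    (hij : form M (simpleRoot i) (simpleRoot j) ^ 2 ≠ 1) {v : B →₀ ℝ}
    (hv : v ∈ Submodule.span ℝ {simpleRoot i, simpleRoot j})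
    (hi : form M (simpleRoot i) v = 0) (hj : form M (simpleRoot j) v = 0) : v = 0 := by
  obtain ⟨a, b, rfl⟩ := Submodule.mem_span_pair.1 hv
  simp only [map_add, map_smul, smul_eq_mul, form_simpleRoot_self,
    form_comm M (simpleRoot j) (simpleRoot i)] at hi hj
  set c := form M (simpleRoot i) (simpleRoot j)
  have hb : b = 0 := by
    have : (1 - c ^ 2) * b = 0 := by linear_combination hj - c * hi
    exact (mul_eq_zero.1 this).resolve_left (sub_ne_zero.2 hij.symm)
  have ha : a = 0 := by simpa [hb] using hi
  simp [ha, hb]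

theorem isLiftable_simpleReflection : M.IsLiftable (simpleReflection M) := by
  intro i j
  rcases eq_or_ne i j with rfl | hij
  · rw [M.diagonal, pow_one, simpleReflection_mul_self]
  by_cases h0 : M i j = 0
  · rw [h0, pow_zero]
  refine LinearMap.ext fun v => sub_eq_zero.1 ?_
  -- An isometry fixing `αᵢ` and `αⱼ` moves `v` orthogonally to both of them.
  have horth {u : B →₀ ℝ}
      (hu : ((simpleReflection M i * simpleReflection M j) ^ M i j) u = u) :
      form M u (((simpleReflection M i * simpleReflection M j) ^ M i j) v - v) = 0 := by
    have h := form_simpleReflection_mul_pow M i j (M i j) u v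
    rw [hu] at h
    rw [map_sub, h, sub_self]
  exact eq_zero_of_mem_span_of_form_eq_zero M (form_simpleRoot_sq_ne_one M hij h0)
    (simpleReflection_mul_pow_sub_mem_span M i j _ v)
    (horth (simpleReflection_mul_pow_simpleRoot_left M hij))
    (horth (simpleReflection_mul_pow_simpleRoot_right M hij))

end Relations

section Rep

variable {B W : Type*} [Group W] {M : CoxeterMatrix B} (cs : CoxeterSystem M W)

/-- The geometric (Tits) representation of a Coxeter group. -/
noncomputable def rep : W →* Module.End ℝ (B →₀ ℝ) :=
  cs.lift ⟨simpleReflection M, isLiftable_simpleReflection M⟩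

lemma rep_simple (i : B) : rep cs (cs.simple i) = simpleReflection M i :=
  cs.lift_apply_simple (isLiftable_simpleReflection M) i

lemma rep_simple_apply (i : B) (v : B →₀ ℝ) :
    rep cs (cs.simple i) v = v - (2 * form M (simpleRoot i) v) • simpleRoot i := by
  rw [rep_simple, simpleReflection_apply]

lemma rep_mul_apply (w w' : W) (v : B →₀ ℝ) : rep cs (w * w') v = rep cs w (rep cs w' v) := by
  rw [map_mul, Module.End.mul_apply]

lemma rep_one_apply (v : B →₀ ℝ) : rep cs 1 v = v := by rw [map_one, Module.End.one_apply]

lemma rep_inv_apply (w : W) (v : B →₀ ℝ) : rep cs w⁻¹ (rep cs w v) = v := by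
  rw [← rep_mul_apply, inv_mul_cancel, rep_one_apply]

lemma rep_apply_inv (w : W) (v : B →₀ ℝ) : rep cs w (rep cs w⁻¹ v) = v := by
  rw [← rep_mul_apply, mul_inv_cancel, rep_one_apply]

lemma rep_injective (w : W) : Function.Injective (rep cs w) :=
  Function.LeftInverse.injective (rep_inv_apply cs w)

lemma rep_simple_simpleRoot (i : B) :
    rep cs (cs.simple i) (simpleRoot i) = -simpleRoot i := by
  rw [rep_simple, simpleReflection_simpleRoot]

lemma rep_simple_apply_of_ne {i j : B} (v : B →₀ ℝ) (h : i ≠ j) :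
    rep cs (cs.simple i) v j = v j := by
  simp [rep_simple_apply, simpleRoot_apply_of_ne h]

lemma form_rep (w : W) (u v : B →₀ ℝ) : form M (rep cs w u) (rep cs w v) = form M u v := by
  induction w using cs.simple_induction_left with
  | one => simp_rw [rep_one_apply]
  | mul_simple_left w i ih => simp_rw [rep_mul_apply, rep_simple, form_simpleReflection, ih]

lemma rep_mul_pow_simpleRoot (i j : B) (k : ℕ) :
    rep cs ((cs.simple i * cs.simple j) ^ k) (simpleRoot i) =
      dihedralCoeff (M i j) (2 * k + 1) • simpleRoot i +
        dihedralCoeff (M i j) (2 * k) • simpleRoot j := by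
  rw [map_pow, map_mul, rep_simple, rep_simple, simpleReflection_mul_pow_simpleRoot]

theorem orderOf_simple_mul (i j : B) : orderOf (cs.simple i * cs.simple j) = M i j := by
  rcases eq_or_ne i j with rfl | hij
  · simp
  refine Nat.dvd_antisymm (orderOf_dvd_of_pow_eq_one (cs.simple_mul_simple_pow i j)) ?_
  have h := rep_mul_pow_simpleRoot cs i j (orderOf (cs.simple i * cs.simple j))
  rw [pow_orderOf_eq_one, rep_one_apply] at h
  rw [← dihedralCoeff_eq_one_and_eq_zero_iff (M.off_diagonal i j hij)]
  constructor
  · simpa [simpleRoot_apply_self, simpleRoot_apply_of_ne hij.symm] using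
      (DFunLike.congr_fun h i).symm
  · simpa [simpleRoot_apply_self, simpleRoot_apply_of_ne hij] using (DFunLike.congr_fun h j).symm

lemma exists_rep_alternatingWord_simpleRoot_eq (i j : B) (k : ℕ) :
    ∃ a ≤ k + 1, ∃ b ≤ k + 1, rep cs (cs.wordProd (alternatingWord i j k)) (simpleRoot i) =
      dihedralCoeff (M i j) a • simpleRoot i + dihedralCoeff (M i j) b • simpleRoot j := by
  rw [cs.prod_alternatingWord_eq_mul_pow]
  rcases Nat.even_or_odd' k with ⟨n, rfl | rfl⟩
  · refine ⟨2 * n + 1, le_rfl, 2 * n, by omega, ?_⟩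
    rw [if_pos (even_two_mul n), one_mul, rep_mul_pow_simpleRoot,
      Nat.mul_div_cancel_left n two_pos]
  · refine ⟨2 * n + 1, by omega, 2 * n + 2, le_rfl, ?_⟩
    rw [if_neg (by simp [parity_simps]), rep_mul_apply, rep_mul_pow_simpleRoot,
      show (2 * n + 1) / 2 = n by omega, dihedralCoeff_add_two]
    simp only [map_add, map_smul, rep_simple_apply, form_simpleRoot, M.symmetric j i,
      M.diagonal, Nat.cast_one, div_one, cos_pi]
    module

end Rep

section Positivity

variable {B W : Type*} [Group W] {M : CoxeterMatrix B} (cs : CoxeterSystem M W)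

lemma exists_not_isRightDescent_mul_alternatingWord {w : W} {i : B} (j : B)
    (hw : ¬ cs.IsRightDescent w i) :
    ∃ v k, w = v * cs.wordProd (alternatingWord i j k) ∧ cs.length v + k = cs.length w ∧
      ¬ cs.IsRightDescent v i ∧ ¬ cs.IsRightDescent v j := by
  suffices h : ∀ n v k, cs.length v = n → w = v * cs.wordProd (alternatingWord i j k) →
      cs.length v + k = cs.length w → ∃ v k, w = v * cs.wordProd (alternatingWord i j k) ∧
        cs.length v + k = cs.length w ∧ ¬ cs.IsRightDescent v i ∧ ¬ cs.IsRightDescent v j from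
    h _ w 0 rfl (by simp [alternatingWord]) rfl
  intro n
  induction n with
  | zero =>
    intro v k hv hwv hk
    exact ⟨v, k, hwv, hk, by simp [IsRightDescent, hv], by simp [IsRightDescent, hv]⟩
  | succ n ih =>
    intro v k hv hwv hk
    by_cases hnext : cs.IsRightDescent v (if Even k then j else i)
    · rw [cs.isRightDescent_iff] at hnext
      refine ih (v * cs.simple (if Even k then j else i)) (k + 1) (by omega) ?_ (by omega)
      rw [alternatingWord_succ', cs.wordProd_cons, mul_assoc, cs.simple_mul_simple_cancel_left, hwv]
    have hprev : ¬ cs.IsRightDescent v (if Even k then i else j) := by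
      cases k with
      | zero => simpa [hwv, alternatingWord] using hw
      | succ l =>
        intro hdesc
        have hparity : (if Even (l + 1) then i else j) = if Even l then j else i := by
          by_cases hl : Even l <;> simp [hl, parity_simps]
        rw [hparity, cs.isRightDescent_iff] at hdesc
        rw [alternatingWord_succ', cs.wordProd_cons, ← mul_assoc] at hwv
        have h₁ := cs.length_mul_le (v * cs.simple (if Even l then j else i))
          (cs.wordProd (alternatingWord i j l))
        have h₂ := cs.length_wordProd_le (alternatingWord i j l)
        rw [length_alternatingWord] at h₂
        rw [← hwv] at h₁
        omega
    refine ⟨v, k, hwv, hk, ?_⟩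
    split_ifs at hnext hprev
    · exact ⟨hprev, hnext⟩
    · exact ⟨hnext, hprev⟩

lemma lt_of_not_isRightDescent_mul_alternatingWord {v : W} {i j : B} {k : ℕ}
    (hk : cs.length v + k = cs.length (v * cs.wordProd (alternatingWord i j k)))
    (hi : ¬ cs.IsRightDescent (v * cs.wordProd (alternatingWord i j k)) i) (h0 : M i j ≠ 0) :
    k < M i j := by
  by_contra! hle
  rcases hle.lt_or_eq with hlt | rfl
  · have hred := cs.not_isReduced_alternatingWord i j h0 hlt
    have h₁ := cs.length_mul_le v (cs.wordProd (alternatingWord i j k))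
    have h₂ := cs.length_wordProd_le (alternatingWord i j k)
    rw [CoxeterSystem.IsReduced, length_alternatingWord] at hred
    rw [length_alternatingWord] at h₂
    omega
  · obtain ⟨l, hl⟩ := Nat.exists_eq_succ_of_ne_zero h0
    -- The braid relation rewrites the suffix of length `M i j` so that it ends in `i`.
    have hbraid : cs.wordProd (alternatingWord i j (M i j)) =
        cs.wordProd (alternatingWord i j l) * cs.simple i := by
      rw [← braidWord, cs.wordProd_braidWord_eq, braidWord, M.symmetric j i, hl,
        alternatingWord_succ, cs.wordProd_concat]
    have h₁ := cs.length_mul_le v (cs.wordProd (alternatingWord i j l))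
    have h₂ := cs.length_wordProd_le (alternatingWord i j l)
    rw [length_alternatingWord] at h₂
    rw [IsRightDescent, ← hk, hbraid, ← mul_assoc, cs.simple_mul_simple_cancel_right] at hi
    omega

theorem rep_nonneg {w : W} {i : B} (hw : ¬ cs.IsRightDescent w i) :
    0 ≤ rep cs w (simpleRoot i) := by
  induction hn : cs.length w using Nat.strong_induction_on generalizing w i with
  | _ n ih =>
  by_cases h1 : w = 1
  · rw [h1, rep_one_apply]
    exact simpleRoot_nonneg i
  obtain ⟨j, hj⟩ := cs.exists_rightDescent_of_ne_one h1
  have hij : i ≠ j := by rintro rfl; exact hw hj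
  obtain ⟨v, k, rfl, hk, hvi, hvj⟩ := exists_not_isRightDescent_mul_alternatingWord cs j hw
  have hk0 : k ≠ 0 := by rintro rfl; exact hvj (by simpa [alternatingWord] using hj)
  have hlt : M i j ≠ 0 → k < M i j := lt_of_not_isRightDescent_mul_alternatingWord cs hk hw
  have hcoeff {a : ℕ} (ha : a ≤ k + 1) : 0 ≤ dihedralCoeff (M i j) a :=
    dihedralCoeff_nonneg (M.off_diagonal i j hij) fun h0 => ha.trans (hlt h0)
  obtain ⟨a, ha, b, hb, hrep⟩ := exists_rep_alternatingWord_simpleRoot_eq cs i j k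
  rw [rep_mul_apply, hrep, map_add, map_smul, map_smul]
  exact add_nonneg (smul_nonneg (hcoeff ha) (ih _ (by omega) hvi rfl))
    (smul_nonneg (hcoeff hb) (ih _ (by omega) hvj rfl))

theorem rep_nonpos {w : W} {i : B} (hw : cs.IsRightDescent w i) :
    rep cs w (simpleRoot i) ≤ 0 := by
  have h := rep_nonneg cs ((cs.isRightDescent_iff_not_isRightDescent_mul).1 hw)
  rwa [rep_mul_apply, rep_simple_simpleRoot, map_neg, neg_nonneg] at h

end Positivity

section Roots

variable {B W : Type*} [Group W] {M : CoxeterMatrix B} (cs : CoxeterSystem M W)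

/-- Roots are the images of the simple roots under the Tits representation. -/
def IsRoot (β : B →₀ ℝ) : Prop := ∃ w i, β = rep cs w (simpleRoot i)

/-- The inversion set of `w`: the positive roots made negative by `w`. -/
def inversions (w : W) : Set (B →₀ ℝ) := {β | IsRoot cs β ∧ 0 ≤ β ∧ rep cs w β ≤ 0}

variable {cs}

lemma isRoot_simpleRoot (i : B) : IsRoot cs (simpleRoot i) := ⟨1, i, by rw [rep_one_apply]⟩

namespace IsRoot

variable {β : B →₀ ℝ}

lemma rep_apply (h : IsRoot cs β) (w : W) : IsRoot cs (rep cs w β) := by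
  obtain ⟨v, i, rfl⟩ := h
  exact ⟨w * v, i, by rw [rep_mul_apply]⟩

lemma neg (h : IsRoot cs β) : IsRoot cs (-β) := by
  obtain ⟨v, i, rfl⟩ := h
  exact ⟨v * cs.simple i, i, by rw [rep_mul_apply, rep_simple_simpleRoot, map_neg]⟩

lemma nonneg_or_nonpos (h : IsRoot cs β) : 0 ≤ β ∨ β ≤ 0 := by
  obtain ⟨v, i, rfl⟩ := h
  exact (em (cs.IsRightDescent v i)).symm.imp (rep_nonneg cs) (rep_nonpos cs)

lemma ne_zero (h : IsRoot cs β) : β ≠ 0 := by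
  obtain ⟨v, i, rfl⟩ := h
  exact (map_ne_zero_iff _ (rep_injective cs v)).2 (simpleRoot_ne_zero i)

lemma not_nonpos_of_nonneg (h : IsRoot cs β) (h0 : 0 ≤ β) : ¬ β ≤ 0 :=
  fun h0' => h.ne_zero (le_antisymm h0' h0)

lemma form_self (h : IsRoot cs β) : form M β β = 1 := by
  obtain ⟨v, i, rfl⟩ := h
  rw [form_rep, form_simpleRoot_self]

lemma eq_simpleRoot_of_rep_simple_nonpos (h : IsRoot cs β) (h0 : 0 ≤ β) {i : B}
    (hi : rep cs (cs.simple i) β ≤ 0) : β = simpleRoot i := by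
  have hβ : β = β i • simpleRoot i := by
    ext j
    rcases eq_or_ne i j with rfl | hij
    · simp [simpleRoot_apply_self]
    · have hj := hi j
      rw [rep_simple_apply_of_ne cs β hij] at hj
      simp [simpleRoot_apply_of_ne hij, le_antisymm hj (h0 j)]
  have hform := h.form_self
  rw [hβ] at hform
  simp only [map_smul, LinearMap.smul_apply, form_simpleRoot_self, smul_eq_mul, mul_one,
    mul_self_eq_one_iff] at hform
  have hpos : 0 ≤ β i := h0 i
  rw [hβ, hform.resolve_right (by linarith), one_smul]

lemma rep_simple_nonneg (h : IsRoot cs β) (h0 : 0 ≤ β) {i : B} (hi : β ≠ simpleRoot i) :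
    0 ≤ rep cs (cs.simple i) β :=
  (h.rep_apply _).nonneg_or_nonpos.resolve_right
    fun hneg => hi (h.eq_simpleRoot_of_rep_simple_nonpos h0 hneg)

end IsRoot

lemma finite_inversions (w : W) : (inversions cs w).Finite := by
  induction w using cs.simple_induction_left with
  | one =>
    refine Set.finite_empty.subset fun β ⟨h, h0, h1⟩ => h.not_nonpos_of_nonneg h0 ?_
    rwa [rep_one_apply] at h1
  | mul_simple_left w i ih =>
    refine (ih.insert (rep cs w⁻¹ (simpleRoot i))).subset fun β ⟨h, h0, h1⟩ => ?_
    refine (h.rep_apply w).nonneg_or_nonpos.imp (fun h2 => ?_) fun h2 => ⟨h, h0, h2⟩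
    rw [rep_mul_apply] at h1
    rw [← (h.rep_apply w).eq_simpleRoot_of_rep_simple_nonpos h2 h1, rep_inv_apply]

lemma inversions_injective : Function.Injective (inversions cs) := by
  intro g g' hgg'
  by_contra hne
  obtain ⟨i, hi⟩ := cs.exists_rightDescent_of_ne_one (mt mul_inv_eq_one.1 hne)
  have hneg := rep_nonpos cs hi
  rw [rep_mul_apply] at hneg
  have hroot : IsRoot cs (rep cs g'⁻¹ (simpleRoot i)) := (isRoot_simpleRoot i).rep_apply _
  rcases hroot.nonneg_or_nonpos with h | h
  · have hmem : rep cs g'⁻¹ (simpleRoot i) ∈ inversions cs g' := hgg' ▸ ⟨hroot, h, hneg⟩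
    have hmem' := hmem.2.2
    rw [rep_apply_inv] at hmem'
    exact (isRoot_simpleRoot (cs := cs) i).not_nonpos_of_nonneg (simpleRoot_nonneg i) hmem'
  · have hmem : -rep cs g'⁻¹ (simpleRoot i) ∈ inversions cs g := by
      refine hgg' ▸ ⟨hroot.neg, neg_nonneg.2 h, ?_⟩
      rw [map_neg, rep_apply_inv, neg_nonpos]
      exact simpleRoot_nonneg i
    have hmem' := hmem.2.2
    rw [map_neg, neg_nonpos] at hmem'
    exact (hroot.rep_apply g).not_nonpos_of_nonneg hmem' hneg

lemma simple_mem_parabolic {T : Set B} {i : B} (hi : i ∈ T) : cs.simple i ∈ cs.parabolic T :=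
  Subgroup.subset_closure ⟨i, hi, rfl⟩

lemma rep_apply_of_mem_parabolic {T : Set B} {g : W} (hg : g ∈ cs.parabolic T) {i : B}
    (hi : i ∉ T) (v : B →₀ ℝ) : rep cs g v i = v i := by
  induction hg using Subgroup.closure_induction generalizing v with
  | mem x hx =>
    obtain ⟨j, hj, rfl⟩ := hx
    exact rep_simple_apply_of_ne cs v (ne_of_mem_of_not_mem hj hi)
  | one => rw [rep_one_apply]
  | mul x y _ _ hx hy => rw [rep_mul_apply, hx, hy]
  | inv x _ hx => rw [← hx (rep cs x⁻¹ v), rep_apply_inv]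

end Roots

section TitsCone

variable {B W : Type*} [Group W] {M : CoxeterMatrix B} {cs : CoxeterSystem M W}
  {x y : Dual ℝ (B →₀ ℝ)}

/-- A functional is dominant if it lies in the closed fundamental chamber. -/
def IsDominant (y : Dual ℝ (B →₀ ℝ)) : Prop := ∀ i, 0 ≤ y (simpleRoot i)

/-- The walls of the fundamental chamber on which `y` lies. -/
def walls (y : Dual ℝ (B →₀ ℝ)) : Set B := {i | y (simpleRoot i) = 0}

variable (cs) in
/-- The positive roots that are nonpositive at `y`. Finiteness of this set is the combinatorial form
in which `y` being an interior point of the Tits cone is used. -/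
def nonposRoots (y : Dual ℝ (B →₀ ℝ)) : Set (B →₀ ℝ) := {β | IsRoot cs β ∧ 0 ≤ β ∧ y β ≤ 0}

lemma IsDominant.apply_nonneg (hy : IsDominant y) {v : B →₀ ℝ} (hv : 0 ≤ v) : 0 ≤ y v := by
  have hsum : y = Finsupp.linearCombination ℝ fun i => y (simpleRoot i) := by
    ext i
    simp [simpleRoot]
  rw [hsum, Finsupp.linearCombination_apply]
  exact Finset.sum_nonneg fun i _ => mul_nonneg (hv i) (hy i)

lemma IsDominant.apply_nonpos (hy : IsDominant y) {v : B →₀ ℝ} (hv : v ≤ 0) : y v ≤ 0 := by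
  have h := hy.apply_nonneg (neg_nonneg.2 hv)
  rwa [map_neg, neg_nonneg] at h

lemma comp_rep_simple {i : B} (hi : i ∈ walls y) : y ∘ₗ rep cs (cs.simple i) = y := by
  refine LinearMap.ext fun v => ?_
  rw [LinearMap.comp_apply, rep_simple_apply, map_sub, map_smul, show y (simpleRoot i) = 0 from hi,
    smul_zero, sub_zero]

lemma comp_rep_mul (g h : W) : y ∘ₗ rep cs (g * h) = (y ∘ₗ rep cs g) ∘ₗ rep cs h := by
  rw [map_mul, Module.End.mul_eq_comp, LinearMap.comp_assoc]

lemma comp_rep_one : y ∘ₗ rep cs (1 : W) = y := by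
  rw [map_one, Module.End.one_eq_id, LinearMap.comp_id]

lemma comp_rep_of_mem_parabolic {g : W} (hg : g ∈ cs.parabolic (walls y)) :
    y ∘ₗ rep cs g = y := by
  induction hg using Subgroup.closure_induction with
  | mem x hx =>
    obtain ⟨i, hi, rfl⟩ := hx
    exact comp_rep_simple hi
  | one => exact comp_rep_one
  | mul g h _ _ hg hh => rw [comp_rep_mul, hg, hh]
  | inv g _ hg =>
    conv_lhs => rw [← hg]
    rw [← comp_rep_mul, mul_inv_cancel, comp_rep_one]

lemma mem_walls_of_comp_rep_simple {i : B} (h : y ∘ₗ rep cs (cs.simple i) = y) : i ∈ walls y := by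
  have hi := LinearMap.congr_fun h (simpleRoot i)
  rw [LinearMap.comp_apply, rep_simple_simpleRoot, map_neg, neg_eq_self] at hi
  exact hi

theorem mem_parabolic_walls_of_isDominant (hy : IsDominant y) {g : W}
    (hg : IsDominant (y ∘ₗ rep cs g)) : g ∈ cs.parabolic (walls y) := by
  induction hn : cs.length g using Nat.strong_induction_on generalizing g with
  | _ n ih =>
  by_cases h1 : g = 1
  · exact h1 ▸ one_mem _
  obtain ⟨i, hi⟩ := cs.exists_leftDescent_of_ne_one h1
  have hwall : i ∈ walls y := by
    have h := hg.apply_nonpos (rep_nonpos cs (cs.isRightDescent_inv_iff.2 hi))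
    rw [LinearMap.comp_apply, rep_apply_inv] at h
    exact le_antisymm h (hy i)
  have hmem := ih _ (hi.trans_eq hn) (by rwa [comp_rep_mul, comp_rep_simple hwall]) rfl
  rwa [Subgroup.mul_mem_cancel_left _ (simple_mem_parabolic hwall)] at hmem

lemma finite_nonposRoots_comp_rep (hy : (nonposRoots cs y).Finite) (g : W) :
    (nonposRoots cs (y ∘ₗ rep cs g)).Finite := by
  refine ((finite_inversions (cs := cs) g).union (hy.preimage (rep_injective cs g).injOn)).subset
    fun β ⟨h, h0, hβ⟩ => ?_
  exact (h.rep_apply g).nonneg_or_nonpos.symm.imp (fun h1 => ⟨h, h0, h1⟩)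
    fun h1 => ⟨h.rep_apply g, h1, hβ⟩

theorem exists_isDominant_comp_rep (hx : (nonposRoots cs x).Finite) :
    ∃ w, IsDominant (x ∘ₗ rep cs w) := by
  induction hn : (nonposRoots cs x).ncard using Nat.strong_induction_on generalizing x with
  | _ n ih =>
  by_cases hdom : IsDominant x
  · exact ⟨1, by rwa [comp_rep_one]⟩
  obtain ⟨i, hi⟩ := not_forall.1 hdom
  have hmaps : rep cs (cs.simple i) '' nonposRoots cs (x ∘ₗ rep cs (cs.simple i)) ⊆
      nonposRoots cs x \ {simpleRoot i} := by
    rintro _ ⟨β, ⟨h, h0, hβ⟩, rfl⟩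
    have hne : β ≠ simpleRoot i := by
      rintro rfl
      rw [LinearMap.comp_apply, rep_simple_simpleRoot, map_neg, neg_nonpos] at hβ
      exact hi hβ
    refine ⟨⟨h.rep_apply _, h.rep_simple_nonneg h0 hne, hβ⟩, fun heq => ?_⟩
    have hβ' : β = -simpleRoot i := by
      rw [← rep_simple_simpleRoot cs, ← Set.mem_singleton_iff.1 heq, ← rep_mul_apply,
        cs.simple_mul_simple_self, rep_one_apply]
    exact h.not_nonpos_of_nonneg h0 (hβ' ▸ neg_nonpos.2 (simpleRoot_nonneg i))
  have hcard : (nonposRoots cs (x ∘ₗ rep cs (cs.simple i))).ncard < n := by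
    rw [← Set.ncard_image_of_injective _ (rep_injective cs (cs.simple i)), ← hn]
    refine (Set.ncard_le_ncard hmaps hx.sdiff).trans_lt (Set.ncard_sdiff_singleton_lt_of_mem ?_ hx)
    exact ⟨isRoot_simpleRoot i, simpleRoot_nonneg i, (not_le.1 hi).le⟩
  obtain ⟨w, hw⟩ := ih _ hcard (finite_nonposRoots_comp_rep hx _) rfl
  exact ⟨cs.simple i * w, by rwa [comp_rep_mul]⟩

theorem IsDominant.isSpherical_walls (hy : IsDominant y) (hfin : (nonposRoots cs y).Finite) :
    cs.IsSpherical (walls y) := by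
  have hsub (g : cs.parabolic (walls y)) : inversions cs g.1 ∈ 𝒫 nonposRoots cs y := by
    rintro β ⟨h, h0, hβ⟩
    refine ⟨h, h0, ?_⟩
    rw [← LinearMap.congr_fun (comp_rep_of_mem_parabolic g.2) β]
    exact hy.apply_nonpos hβ
  have := hfin.powerset.to_subtype
  exact Finite.of_injective (fun g => (⟨_, hsub g⟩ : 𝒫 nonposRoots cs y)) fun g g' h =>
    Subtype.ext (inversions_injective (congrArg Subtype.val h))

end TitsCone

section FiniteSubgroups

variable {B W : Type*} [Group W] {M : CoxeterMatrix B} {cs : CoxeterSystem M W}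
  {x y : Dual ℝ (B →₀ ℝ)}

/-- The height of a vector: the sum of its coordinates in the basis of simple roots. -/
noncomputable def height : Dual ℝ (B →₀ ℝ) := Finsupp.linearCombination ℝ fun _ : B => (1 : ℝ)

lemma IsRoot.height_pos {β : B →₀ ℝ} (h : IsRoot cs β) (h0 : 0 ≤ β) : 0 < height β := by
  rw [height, Finsupp.linearCombination_apply]
  simp only [smul_eq_mul, mul_one]
  exact Finset.sum_pos (fun i hi => (h0 i).lt_of_ne' (Finsupp.mem_support_iff.1 hi))
    (Finsupp.support_nonempty_iff.2 h.ne_zero)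

lemma exists_invariant_dual (cs : CoxeterSystem M W) (H : Subgroup W) [Finite H] :
    ∃ y : Dual ℝ (B →₀ ℝ), (∀ h ∈ H, y ∘ₗ rep cs h = y) ∧
      ∀ v, (∀ h ∈ H, 0 < height (rep cs h v)) → 0 < y v := by
  have := Fintype.ofFinite H
  refine ⟨∑ h : H, height ∘ₗ rep cs h.1, fun g hg => ?_, fun v hv => ?_⟩
  · refine LinearMap.ext fun v => ?_
    rw [LinearMap.comp_apply, LinearMap.sum_apply, LinearMap.sum_apply]
    exact Fintype.sum_equiv (Equiv.mulRight (⟨g, hg⟩ : H)) _ _ fun h =>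
      congrArg height (rep_mul_apply cs h.1 g v).symm
  · rw [LinearMap.sum_apply]
    exact Finset.sum_pos (fun h _ => hv h h.2) Finset.univ_nonempty

lemma finite_nonposRoots_of_pos {H : Subgroup W} [Finite H]
    (hpos : ∀ v, (∀ h ∈ H, 0 < height (rep cs h v)) → 0 < y v) :
    (nonposRoots cs y).Finite := by
  refine (Set.finite_iUnion fun h : H => finite_inversions (cs := cs) h.1).subset
    fun β ⟨hβ, h0, hy⟩ => ?_
  contrapose! hy
  refine hpos β fun h hh => (hβ.rep_apply h).height_pos ?_
  exact (hβ.rep_apply h).nonneg_or_nonpos.resolve_right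
    fun hneg => hy (Set.mem_iUnion.2 ⟨⟨h, hh⟩, hβ, h0, hneg⟩)

lemma mem_conjSubgroup {G : Type*} [Group G] {g x : G} {H : Subgroup G} :
    x ∈ conjSubgroup g H ↔ ∃ h ∈ H, g * h * g⁻¹ = x := Iff.rfl

theorem exists_conjSubgroup_le_parabolic (cs : CoxeterSystem M W) (H : Subgroup W) [Finite H] :
    ∃ g T, cs.IsSpherical T ∧ conjSubgroup g H ≤ cs.parabolic T := by
  obtain ⟨y, hinv, hpos⟩ := exists_invariant_dual cs H
  have hfin := finite_nonposRoots_of_pos hpos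
  obtain ⟨w, hw⟩ := exists_isDominant_comp_rep hfin
  refine ⟨w⁻¹, walls (y ∘ₗ rep cs w), hw.isSpherical_walls (finite_nonposRoots_comp_rep hfin w), ?_⟩
  rintro _ ⟨h, hh, rfl⟩
  refine mem_parabolic_walls_of_isDominant hw ?_
  have hcomm : w * (w⁻¹ * h * w⁻¹⁻¹) = h * w := by group
  change IsDominant ((y ∘ₗ rep cs w) ∘ₗ rep cs (w⁻¹ * h * w⁻¹⁻¹))
  rwa [← comp_rep_mul, hcomm, comp_rep_mul, hinv h hh]

lemma exists_isDominant_walls_eq {U : Set B} (hU : cs.IsSpherical U) :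
    ∃ y, IsDominant y ∧ walls y = U ∧ (nonposRoots cs y).Finite := by
  have : Finite (cs.parabolic U) := hU
  obtain ⟨y, hinv, hpos⟩ := exists_invariant_dual cs (cs.parabolic U)
  have hzero (i : B) (hi : i ∈ U) : i ∈ walls y :=
    mem_walls_of_comp_rep_simple (hinv _ (simple_mem_parabolic hi))
  have hpos' (i : B) (hi : i ∉ U) : 0 < y (simpleRoot i) := by
    refine hpos _ fun h hh => ((isRoot_simpleRoot i).rep_apply h).height_pos ?_
    refine ((isRoot_simpleRoot (cs := cs) i).rep_apply h).nonneg_or_nonpos.resolve_right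
      fun hneg => ?_
    have hi' := hneg i
    rw [rep_apply_of_mem_parabolic hh hi, simpleRoot_apply_self] at hi'
    exact hi'.not_gt one_pos
  refine ⟨y, fun i => ?_, Set.Subset.antisymm (fun i hi => ?_) hzero,
    finite_nonposRoots_of_pos hpos⟩
  · by_cases hi : i ∈ U
    · exact (hzero i hi).ge
    · exact (hpos' i hi).le
  · by_contra hiU
    exact (hpos' i hiU).ne' hi

lemma walls_eq_of_isMaxSpherical {U : Set B} (hU : cs.IsMaxSpherical U) (hy : IsDominant y)
    (hfin : (nonposRoots cs y).Finite) (hsub : U ⊆ walls y) : walls y = U :=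
  hU.2 _ (hy.isSpherical_walls hfin) hsub

lemma exists_nonneg_mul_add_eq_zero {a b : B → ℝ} {U : Set B} (ha : ∀ j ∉ U, 0 < a j)
    (hfin : {j | j ∉ U ∧ b j ≤ 0}.Finite) {i : B} (hi : i ∉ U) (hb : b i ≤ 0) :
    ∃ t : ℝ, 0 ≤ t ∧ (∃ j ∉ U, t * a j + b j = 0) ∧ ∀ k ∉ U, 0 ≤ t * a k + b k := by
  obtain ⟨j, ⟨hj, hbj⟩, hmax⟩ := Set.exists_max_image _ (fun j => -b j / a j) hfin ⟨i, hi, hb⟩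
  have ht : 0 ≤ -b j / a j := div_nonneg (neg_nonneg.2 hbj) (ha j hj).le
  refine ⟨-b j / a j, ht, ⟨j, hj, ?_⟩, fun k hk => ?_⟩
  · rw [div_mul_cancel₀ _ (ha j hj).ne', neg_add_cancel]
  · rcases le_or_gt (b k) 0 with hbk | hbk
    · exact neg_le_iff_add_nonneg.1 ((div_le_iff₀ (ha k hk)).1 (hmax k ⟨hk, hbk⟩))
    · exact add_nonneg (mul_nonneg ht (ha k hk).le) hbk.le

lemma apply_simpleRoot_pos_of_isMaxSpherical {U : Set B} (hU : cs.IsMaxSpherical U)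
    (hx : (nonposRoots cs x).Finite) (hsub : U ⊆ walls x) {i : B} (hi : i ∉ U) :
    0 < x (simpleRoot i) := by
  obtain ⟨y, hy, rfl, -⟩ := exists_isDominant_walls_eq hU.1
  have hypos (j : B) (hj : j ∉ walls y) : 0 < y (simpleRoot j) := (hy j).lt_of_ne' hj
  have hfin : {j | j ∉ walls y ∧ x (simpleRoot j) ≤ 0}.Finite :=
    (hx.subset <| Set.image_subset_iff.2 fun j hj =>
      ⟨isRoot_simpleRoot j, simpleRoot_nonneg j, hj.2⟩).of_finite_image
        (Finsupp.single_left_injective one_ne_zero).injOn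
  by_contra! hneg
  -- The last dominant point on the segment from `y` to `x` lies on an additional wall.
  obtain ⟨t, ht, ⟨j, hj, hzero⟩, hnonneg⟩ := exists_nonneg_mul_add_eq_zero hypos hfin hi hneg
  have hwalls : walls y ⊆ walls (t • y + x) := fun k hk => by
    change t * y (simpleRoot k) + x (simpleRoot k) = 0
    rw [show y (simpleRoot k) = 0 from hk, show x (simpleRoot k) = 0 from hsub hk, mul_zero,
      add_zero]
  have hz : IsDominant (t • y + x) := fun k => by
    by_cases hk : k ∈ walls y
    · exact (hwalls hk).ge
    · exact hnonneg k hk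
  have hzfin : (nonposRoots cs (t • y + x)).Finite := hx.subset fun β ⟨h, h0, hβ⟩ =>
    ⟨h, h0, (le_add_of_nonneg_left (mul_nonneg ht (hy.apply_nonneg h0))).trans hβ⟩
  exact hj (walls_eq_of_isMaxSpherical hU hz hzfin hwalls ▸ hzero)

theorem eq_of_conjSubgroup_le {U T : Set B} (hU : cs.IsMaxSpherical U)
    (hT : cs.IsSpherical T) {g : W} (hg : conjSubgroup g (cs.parabolic U) ≤ cs.parabolic T) :
    U = T := by
  obtain ⟨y, hy, rfl, hfin⟩ := exists_isDominant_walls_eq hT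
  have hsub : U ⊆ walls (y ∘ₗ rep cs g) := fun i hi => by
    refine mem_walls_of_comp_rep_simple (cs := cs) ?_
    have hconj := comp_rep_of_mem_parabolic
      (hg (mem_conjSubgroup.2 ⟨_, simple_mem_parabolic hi, rfl⟩))
    rw [← comp_rep_mul]
    nth_rw 2 [← hconj]
    rw [← comp_rep_mul, inv_mul_cancel_right]
  have hfin' := finite_nonposRoots_comp_rep hfin g
  have hdom : IsDominant (y ∘ₗ rep cs g) := fun i => by
    by_cases hi : i ∈ U
    · exact (hsub hi).ge
    · exact (apply_simpleRoot_pos_of_isMaxSpherical hU hfin' hsub hi).le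
  rw [← walls_eq_of_isMaxSpherical hU hdom hfin' hsub,
    comp_rep_of_mem_parabolic (mem_parabolic_walls_of_isDominant hy hdom)]

end FiniteSubgroups

section Dihedral

variable {G : Type*} [Group G] {a b : G}

lemma mem_zpowers_or_mul_mem_zpowers (ha : a * a = 1) (hb : b * b = 1) {x : G}
    (hx : x ∈ Subgroup.closure {a, b}) :
    x ∈ Subgroup.zpowers (a * b) ∨ x * a ∈ Subgroup.zpowers (a * b) := by
  have hR := Subgroup.mem_zpowers (a * b)
  have hba : b * a = (a * b)⁻¹ := by
    rw [mul_inv_rev, inv_eq_of_mul_eq_one_left ha, inv_eq_of_mul_eq_one_left hb]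
  have hmul (x y : G) (hy : y ∈ ({a, b} : Set G))
      (h : x ∈ Subgroup.zpowers (a * b) ∨ x * a ∈ Subgroup.zpowers (a * b)) :
      x * y ∈ Subgroup.zpowers (a * b) ∨ x * y * a ∈ Subgroup.zpowers (a * b) := by
    rcases hy with rfl | rfl <;> rcases h with h | h
    · exact .inr (by rwa [mul_assoc, ha, mul_one])
    · exact .inl h
    · exact .inr (by rw [mul_assoc, hba]; exact mul_mem h (inv_mem hR))
    · refine .inl ?_
      have := mul_mem h hR
      rwa [mul_assoc, ← mul_assoc a a, ha, one_mul] at this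
  induction hx using Subgroup.closure_induction_right with
  | one => exact .inl (one_mem _)
  | mul_right x _ y hy ih => exact hmul x y hy ih
  | mul_inv_cancel x _ y hy ih =>
    have hinv : y⁻¹ = y := by
      rcases hy with rfl | rfl <;> exact inv_eq_of_mul_eq_one_left ‹_›
    exact hinv.symm ▸ hmul x y hy ih

lemma finite_closure_pair (ha : a * a = 1) (hb : b * b = 1) (h : orderOf (a * b) ≠ 0) :
    Finite (Subgroup.closure {a, b}) := by
  have hR := (orderOf_ne_zero_iff.1 h).finite_zpowers
  refine ((hR.union (hR.preimage (mul_left_injective a).injOn)).subset fun x hx => ?_).to_subtype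
  exact mem_zpowers_or_mul_mem_zpowers ha hb hx

lemma mul_mem_zpowers_of_mul_self (ha : a * a = 1) (hb : b * b = 1) (hodd : Odd (orderOf (a * b)))
    {x y : G} (hx : x ∈ Subgroup.closure {a, b}) (hy : y ∈ Subgroup.closure {a, b})
    (hx2 : x * x = 1) (hy2 : y * y = 1) (hx1 : x ≠ 1) (hy1 : y ≠ 1) :
    x * y ∈ Subgroup.zpowers (a * b) := by
  have hreflection {z : G} (hz : z ∈ Subgroup.closure {a, b}) (hz2 : z * z = 1) (hz1 : z ≠ 1) :
      z * a ∈ Subgroup.zpowers (a * b) := by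
    refine (mem_zpowers_or_mul_mem_zpowers ha hb hz).resolve_left fun hz' => hz1 ?_
    have h2 : orderOf z ∣ 2 := orderOf_dvd_of_pow_eq_one (by rw [pow_two, hz2])
    exact orderOf_eq_one_iff.1 <| Nat.eq_one_of_dvd_coprimes (Nat.coprime_two_right.2 hodd)
      (orderOf_dvd_of_mem_zpowers hz') h2
  have h := mul_mem (hreflection hx hx2 hx1) (inv_mem (hreflection hy hy2 hy1))
  rwa [mul_inv_rev, mul_assoc, mul_inv_cancel_left, inv_eq_of_mul_eq_one_left hy2] at h

end Dihedral

section Pairs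

variable {B W : Type*} [Group W] {M : CoxeterMatrix B} {cs : CoxeterSystem M W} {T : Set B}
  {i j k : B}

lemma simple_ne_one (cs : CoxeterSystem M W) (i : B) : cs.simple i ≠ 1 := fun h => by
  simpa [h] using cs.length_simple i

lemma commute_simple_iff (cs : CoxeterSystem M W) (hij : i ≠ j) :
    Commute (cs.simple i) (cs.simple j) ↔ M i j = 2 := by
  have h : Commute (cs.simple i) (cs.simple j) ↔ (cs.simple i * cs.simple j) ^ 2 = 1 := by
    rw [pow_two, mul_eq_one_iff_eq_inv, mul_inv_rev, cs.inv_simple, cs.inv_simple]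
    rfl
  rw [h, ← orderOf_dvd_iff_pow_eq_one, orderOf_simple_mul, Nat.dvd_prime Nat.prime_two]
  exact or_iff_right (M.off_diagonal i j hij)

lemma ne_zero_of_isSpherical (hT : cs.IsSpherical T) (hi : i ∈ T) (hj : j ∈ T) : M i j ≠ 0 := by
  have : Finite (cs.parabolic T) := hT
  let x : cs.parabolic T := ⟨_, mul_mem (simple_mem_parabolic hi) (simple_mem_parabolic hj)⟩
  rw [← orderOf_simple_mul cs, ← Subgroup.orderOf_mk _ x.2]
  exact (orderOf_pos x).ne'

lemma parabolic_pair (cs : CoxeterSystem M W) (i j : B) :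
    cs.parabolic {i, j} = Subgroup.closure {cs.simple i, cs.simple j} := by
  rw [parabolic, Set.image_pair]

lemma isSpherical_pair (cs : CoxeterSystem M W) (h : M i j ≠ 0) : cs.IsSpherical {i, j} := by
  rw [IsSpherical, parabolic_pair]
  exact finite_closure_pair (cs.simple_mul_simple_self i) (cs.simple_mul_simple_self j)
    ((orderOf_simple_mul cs i j).symm ▸ h)

lemma exists_isMaxSpherical [Finite B] (hT : cs.IsSpherical T) :
    ∃ U, T ⊆ U ∧ cs.IsMaxSpherical U := by
  obtain ⟨U, hTU, hU, hmax⟩ := Finite.exists_le_maximal hT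
  exact ⟨U, hTU, hU, fun V hV hUV => (hmax hV hUV).antisymm hUV⟩

lemma exists_isMaxSpherical_iff_ne_zero [Finite B] (cs : CoxeterSystem M W) :
    (∃ T, cs.IsMaxSpherical T ∧ i ∈ T ∧ j ∈ T) ↔ M i j ≠ 0 := by
  refine ⟨fun ⟨T, hT, hi, hj⟩ => ne_zero_of_isSpherical hT.1 hi hj, fun h => ?_⟩
  obtain ⟨T, hsub, hT⟩ := exists_isMaxSpherical (isSpherical_pair cs h)
  exact ⟨T, hT, hsub (by simp), hsub (by simp)⟩

lemma mul_mem_zpowers_of_mem_parabolic_pair (hodd : Odd (M i j)) {x y : W}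
    (hx : x ∈ cs.parabolic {i, j}) (hy : y ∈ cs.parabolic {i, j}) (hx2 : x * x = 1)
    (hy2 : y * y = 1) (hx1 : x ≠ 1) (hy1 : y ≠ 1) :
    x * y ∈ Subgroup.zpowers (cs.simple i * cs.simple j) := by
  rw [parabolic_pair] at hx hy
  rw [← orderOf_simple_mul cs] at hodd
  exact mul_mem_zpowers_of_mul_self (cs.simple_mul_simple_self i) (cs.simple_mul_simple_self j)
    hodd hx hy hx2 hy2 hx1 hy1

lemma form_simpleRoot_ne_zero (hij : i ≠ j) (hodd : Odd (M i j)) :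
    form M (simpleRoot i) (simpleRoot j) ≠ 0 := by
  have h1 := M.off_diagonal i j hij
  have h3 : (2 : ℝ) < M i j := by
    have := hodd.pos
    have : M i j ≠ 2 := fun h => absurd (h ▸ hodd) (by decide)
    exact_mod_cast (by omega : 2 < M i j)
  have hlt : π / M i j < π / 2 := div_lt_div_of_pos_left pi_pos two_pos h3
  rw [form_simpleRoot, neg_ne_zero]
  exact (cos_pos_of_mem_Ioo ⟨by linarith [div_nonneg pi_pos.le (Nat.cast_nonneg (M i j)), pi_pos],
    hlt⟩).ne'

lemma not_commute_mul_mul (cs : CoxeterSystem M W) (hij : i ≠ j) (hik : i ≠ k) (hjk : j ≠ k)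
    (hodd : Odd (M i j)) (h0 : M j k ≠ 0) :
    ¬ Commute (cs.simple i * cs.simple j) (cs.simple i * cs.simple k) := by
  intro h
  have hbraid : cs.simple j * cs.simple i * cs.simple k
      = cs.simple k * cs.simple i * cs.simple j := by
    simpa only [mul_assoc, mul_right_inj] using h.eq
  have hcoord (v : B →₀ ℝ) : form M (simpleRoot k) v * form M (simpleRoot i) (simpleRoot k)
      = form M (simpleRoot j) v * form M (simpleRoot i) (simpleRoot j) := by
    have hv := DFunLike.congr_fun (DFunLike.congr_fun (congrArg (rep cs) hbraid) v) i
    simp only [mul_assoc, rep_mul_apply] at hv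
    rw [rep_simple_apply_of_ne _ _ hij.symm, rep_simple_apply_of_ne _ _ hik.symm] at hv
    simp only [rep_simple_apply, Finsupp.sub_apply, Finsupp.smul_apply, simpleRoot_apply_self,
      simpleRoot_apply_of_ne hij.symm, simpleRoot_apply_of_ne hik.symm, map_sub, map_smul,
      smul_eq_mul] at hv
    linarith
  have hj := hcoord (simpleRoot j)
  have hk := hcoord (simpleRoot k)
  rw [form_simpleRoot_self, one_mul, form_comm] at hj
  rw [form_simpleRoot_self, one_mul] at hk
  rw [hk, ← mul_assoc, ← pow_two] at hj
  exact form_simpleRoot_sq_ne_one M hjk h0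
    (mul_right_cancel₀ (form_simpleRoot_ne_zero hij hodd) (hj.trans (one_mul _).symm))

end Pairs

section Dichotomy

variable {B B' W : Type*} [Group W] {M : CoxeterMatrix B} {M' : CoxeterMatrix B'}
  {cs : CoxeterSystem M W} {cs' : CoxeterSystem M' W} {T : Set B} {T' : Set B'} {g : W}

variable (M) in
/-- The simple reflections indexed by `T` commute with each other. -/
def IsCommuting (T : Set B) : Prop := T.Pairwise fun i j => M i j = 2

lemma IsCommuting.isMulCommutative (hT : IsCommuting M T) :
    IsMulCommutative (cs.parabolic T) := by
  refine Subgroup.isMulCommutative_closure ?_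
  rintro _ ⟨i, hi, rfl⟩ _ ⟨j, hj, rfl⟩
  obtain rfl | hij := eq_or_ne i j
  · rfl
  · exact (commute_simple_iff cs hij).2 (hT hi hj hij)

lemma conj_mem_of_conjSubgroup_le {G : Type*} [Group G] {g x : G} {H K : Subgroup G}
    (h : conjSubgroup g H ≤ K) (hx : x ∈ H) : MulAut.conj g x ∈ K :=
  h (Subgroup.mem_map_of_mem _ hx)

lemma IsCommuting.of_conjSubgroup_le (hT : IsCommuting M T)
    (hg : conjSubgroup g (cs'.parabolic T') ≤ cs.parabolic T) : IsCommuting M' T' := by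
  intro i hi j hj hij
  have := hT.isMulCommutative (cs := cs)
  rw [← commute_simple_iff cs' hij, ← commute_map_iff (MulAut.conj g).injective]
  exact setLike_mul_comm (conj_mem_of_conjSubgroup_le hg (simple_mem_parabolic hi))
    (conj_mem_of_conjSubgroup_le hg (simple_mem_parabolic hj))

lemma conj_simple_mul_mem_zpowers {i j : B} (hodd : Odd (M i j))
    (hg : conjSubgroup g (cs'.parabolic T') ≤ cs.parabolic {i, j}) {a b : B'}
    (ha : a ∈ T') (hb : b ∈ T') :
    MulAut.conj g (cs'.simple a * cs'.simple b) ∈ Subgroup.zpowers (cs.simple i * cs.simple j) := by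
  have hsq (c : B') : MulAut.conj g (cs'.simple c) * MulAut.conj g (cs'.simple c) = 1 := by
    rw [← map_mul, cs'.simple_mul_simple_self, map_one]
  have hne (c : B') : MulAut.conj g (cs'.simple c) ≠ 1 :=
    (MulEquiv.map_ne_one_iff _).2 (simple_ne_one cs' c)
  rw [map_mul]
  exact mul_mem_zpowers_of_mem_parabolic_pair hodd
    (conj_mem_of_conjSubgroup_le hg (simple_mem_parabolic ha))
    (conj_mem_of_conjSubgroup_le hg (simple_mem_parabolic hb)) (hsq a) (hsq b) (hne a) (hne b)

lemma dvd_of_conjSubgroup_le {i j : B} (hodd : Odd (M i j))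
    (hg : conjSubgroup g (cs'.parabolic T') ≤ cs.parabolic {i, j}) {a b : B'}
    (ha : a ∈ T') (hb : b ∈ T') : M' a b ∣ M i j := by
  rw [← orderOf_simple_mul cs, ← orderOf_simple_mul cs', ← MulEquiv.orderOf_eq (MulAut.conj g)]
  exact orderOf_dvd_of_mem_zpowers (conj_simple_mul_mem_zpowers hodd hg ha hb)

/-- `T` consists of two simple reflections whose product has odd order. -/
def IsOddPair (M : CoxeterMatrix B) (T : Set B) : Prop :=
  ∃ i j, i ≠ j ∧ Odd (M i j) ∧ T = {i, j}

/-- Every spherical subset is commuting or an odd pair; unlike conditions (0) and (1) of the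
theorem, this transfers readily to another Coxeter generating set. -/
def SphericalDichotomy (cs : CoxeterSystem M W) : Prop :=
  ∀ T, cs.IsSpherical T → IsCommuting M T ∨ IsOddPair M T

lemma isCommuting_or_isOddPair_of_conjSubgroup_le {i j : B} (hodd : Odd (M i j))
    (hg : conjSubgroup g (cs'.parabolic T') ≤ cs.parabolic {i, j}) :
    IsCommuting M' T' ∨ IsOddPair M' T' := by
  rcases T'.subsingleton_or_nontrivial with hT' | ⟨a, ha, b, hb, hab⟩
  · exact .inl (hT'.pairwise _)
  have hodd' {c d : B'} (hc : c ∈ T') (hd : d ∈ T') : Odd (M' c d) :=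
    hodd.of_dvd_nat (dvd_of_conjSubgroup_le hodd hg hc hd)
  refine .inr ⟨a, b, hab, hodd' ha hb, Set.Subset.antisymm (fun c hc => ?_) ?_⟩
  · by_contra hcab
    obtain ⟨hca, hcb⟩ : c ≠ a ∧ c ≠ b := by simpa using hcab
    refine not_commute_mul_mul cs' hab hca.symm hcb.symm (hodd' ha hb) (hodd' hb hc).pos.ne' ?_
    rw [← commute_map_iff (MulAut.conj g).injective]
    exact setLike_mul_comm (conj_simple_mul_mem_zpowers hodd hg ha hb)
      (conj_simple_mul_mem_zpowers hodd hg ha hc)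
  · exact Set.pair_subset ha hb

theorem SphericalDichotomy.transfer (h : SphericalDichotomy cs) : SphericalDichotomy cs' := by
  intro T' hT'
  have : Finite (cs'.parabolic T') := hT'
  obtain ⟨g, T, hT, hg⟩ := exists_conjSubgroup_le_parabolic cs (cs'.parabolic T')
  rcases h T hT with hcomm | ⟨i, j, -, hodd, rfl⟩
  · exact .inl (hcomm.of_conjSubgroup_le hg)
  · exact isCommuting_or_isOddPair_of_conjSubgroup_le hodd hg

lemma IsCommuting.not_odd (hT : IsCommuting M T) {i j : B} (hi : i ∈ T) (hj : j ∈ T)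
    (hij : i ≠ j) : ¬ Odd (M i j) := by
  rw [hT hi hj hij]
  decide

end Dichotomy

section ParabolicConj

open scoped Pointwise

variable {B B' W : Type*} [Group W] {M : CoxeterMatrix B} {M' : CoxeterMatrix B'}
  {cs : CoxeterSystem M W} {cs' : CoxeterSystem M' W} {T U : Set B} {T' U' : Set B'}

lemma conjSubgroup_eq_smul {G : Type*} [Group G] (g : G) (H : Subgroup G) :
    conjSubgroup g H = MulAut.conj g • H := rfl

/-- The parabolic subgroups `W_T` of `cs` and `W_{T'}` of `cs'` are conjugate in `W`. -/
def ParabolicConj (cs : CoxeterSystem M W) (cs' : CoxeterSystem M' W) (T : Set B)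
    (T' : Set B') : Prop :=
  ∃ g : W, conjSubgroup g (cs.parabolic T) = cs'.parabolic T'

lemma ParabolicConj.symm (h : ParabolicConj cs cs' T T') : ParabolicConj cs' cs T' T := by
  obtain ⟨g, hg⟩ := h
  refine ⟨g⁻¹, ?_⟩
  rw [← hg, conjSubgroup_eq_smul, conjSubgroup_eq_smul, map_inv, inv_smul_smul]

lemma ParabolicConj.eq_right (h : ParabolicConj cs cs' T T') (h' : ParabolicConj cs cs' T U')
    (hT' : cs'.IsMaxSpherical T') (hU' : cs'.IsSpherical U') : T' = U' := by
  obtain ⟨g, hg⟩ := h.symm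
  obtain ⟨k, hk⟩ := h'
  refine eq_of_conjSubgroup_le hT' hU' (g := k * g) ?_
  rw [← hk, ← hg, conjSubgroup_eq_smul, conjSubgroup_eq_smul, conjSubgroup_eq_smul, map_mul,
    mul_smul]

lemma ParabolicConj.eq_left (h : ParabolicConj cs cs' T T') (h' : ParabolicConj cs cs' U T')
    (hT : cs.IsMaxSpherical T) (hU : cs.IsSpherical U) : T = U :=
  h.symm.eq_right h'.symm hT hU

lemma exists_conjSubgroup_le_isMaxSpherical [Finite B] (cs : CoxeterSystem M W) (H : Subgroup W)
    [Finite H] : ∃ g T, cs.IsMaxSpherical T ∧ conjSubgroup g H ≤ cs.parabolic T := by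
  obtain ⟨g, T, hT, hg⟩ := exists_conjSubgroup_le_parabolic cs H
  obtain ⟨U, hTU, hU⟩ := exists_isMaxSpherical hT
  exact ⟨g, U, hU, hg.trans (Subgroup.closure_mono (Set.image_mono hTU))⟩

lemma exists_isMaxSpherical_parabolicConj [Finite B] [Finite B'] (cs' : CoxeterSystem M' W)
    (hT : cs.IsMaxSpherical T) : ∃ T', cs'.IsMaxSpherical T' ∧ ParabolicConj cs cs' T T' := by
  have : Finite (cs.parabolic T) := hT.1
  obtain ⟨g, T', hT', hg⟩ := exists_conjSubgroup_le_isMaxSpherical cs' (cs.parabolic T)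
  have : Finite (cs'.parabolic T') := hT'.1
  obtain ⟨k, U, hU, hk⟩ := exists_conjSubgroup_le_isMaxSpherical cs (cs'.parabolic T')
  rw [conjSubgroup_eq_smul] at hg hk
  have hkg : MulAut.conj (k * g) • cs.parabolic T ≤ cs.parabolic U := by
    rw [map_mul, mul_smul]
    exact (Subgroup.pointwise_smul_le_pointwise_smul_iff.2 hg).trans hk
  obtain rfl := eq_of_conjSubgroup_le hT hU.1 hkg
  have heq : MulAut.conj (k * g) • cs.parabolic T = cs.parabolic T :=
    Subgroup.eq_of_le_of_card_ge hkg
      (Nat.card_congr (Subgroup.equivSMul _ (cs.parabolic T)).toEquiv).le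
  rw [map_mul, mul_smul] at heq
  refine ⟨T', hT', g, hg.antisymm ?_⟩
  exact Subgroup.pointwise_smul_le_pointwise_smul_iff.1 (hk.trans heq.ge)

/-- The maximal spherical subsets of a Coxeter system. -/
abbrev MaxSpherical (cs : CoxeterSystem M W) : Type _ := {T // cs.IsMaxSpherical T}

theorem exists_equiv_parabolicConj [Finite B] [Finite B'] (cs : CoxeterSystem M W)
    (cs' : CoxeterSystem M' W) :
    ∃ e : MaxSpherical cs ≃ MaxSpherical cs', ∀ T, ParabolicConj cs cs' T.1 (e T).1 := by
  choose f hf hconj using fun T : MaxSpherical cs => exists_isMaxSpherical_parabolicConj cs' T.2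
  choose f' hf' hconj' using
    fun T' : MaxSpherical cs' => exists_isMaxSpherical_parabolicConj cs T'.2
  refine ⟨⟨fun T => ⟨f T, hf T⟩, fun T' => ⟨f' T', hf' T'⟩, fun T => ?_, fun T' => ?_⟩, hconj⟩
  · exact Subtype.ext ((hconj' ⟨f T, hf T⟩).symm.eq_left (hconj T) (hf' _) T.2.1)
  · exact Subtype.ext ((hconj ⟨f' T', hf' T'⟩).eq_right (hconj' T').symm (hf _) T'.2.1)

end ParabolicConj

section OddClass

variable {B W : Type*} [Group W] {M : CoxeterMatrix B}

variable (M) in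
/-- The equivalence classes of simple reflections generated by `Odd (M i j)`; they correspond to
the conjugacy classes of simple reflections, and to a basis of the sign characters of `W`. -/
def OddClass : Type _ := Quot fun i j => Odd (M i j)

variable (M) in
/-- The odd class of a simple reflection. -/
def oddClass (i : B) : OddClass M := Quot.mk _ i

lemma oddClass_eq_of_odd {i j : B} (h : Odd (M i j)) : oddClass M i = oddClass M j := Quot.sound h

lemma oddClass_surjective : Function.Surjective (oddClass M) := Quot.exists_rep

instance [Finite B] : Finite (OddClass M) := Finite.of_surjective _ oddClass_surjective

lemma isLiftable_units_int_iff {f : B → ℤˣ} :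
    M.IsLiftable f ↔ ∀ i j, Odd (M i j) → f i = f j := by
  refine forall₂_congr fun i j => ?_
  rw [Int.units_pow_eq_pow_mod_two]
  rcases Nat.even_or_odd (M i j) with h | h
  · rw [Nat.even_iff.1 h, pow_zero]
    exact iff_of_true rfl fun h' => absurd h (Nat.not_even_iff_odd.2 h')
  · rw [Nat.odd_iff.1 h, pow_one, mul_eq_one_iff_eq_inv, Int.units_inv_eq_self, imp_iff_right h]

/-- Sign characters of a Coxeter group are the functions on odd classes. -/
def signCharEquiv (cs : CoxeterSystem M W) : (OddClass M → ℤˣ) ≃ (W →* ℤˣ) :=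
  Equiv.trans
    { toFun f := ⟨f ∘ oddClass M, isLiftable_units_int_iff.2 fun _ _ h =>
        congrArg f (oddClass_eq_of_odd h)⟩
      invFun f := Quot.lift f.1 (isLiftable_units_int_iff.1 f.2)
      left_inv _ := funext <| Quot.ind fun _ => rfl
      right_inv _ := rfl }
    cs.lift

lemma signCharEquiv_simple (cs : CoxeterSystem M W) (f : OddClass M → ℤˣ) (i : B) :
    signCharEquiv cs f (cs.simple i) = f (oddClass M i) :=
  cs.lift_apply_simple _ i

lemma parabolic_le_ker_signCharEquiv_iff (cs : CoxeterSystem M W) {f : OddClass M → ℤˣ}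
    {T : Set B} :
    cs.parabolic T ≤ (signCharEquiv cs f).ker ↔ ∀ c ∈ oddClass M '' T, f c = 1 := by
  rw [parabolic, Subgroup.closure_le, Set.image_subset_iff, Set.forall_mem_image]
  exact forall₂_congr fun i _ => by
    rw [Set.mem_preimage, SetLike.mem_coe, MonoidHom.mem_ker, signCharEquiv_simple]

end OddClass

section Mobius

variable {P C C' : Type*} [PartialOrder P] [OrderBot P] [LocallyFiniteOrder P] [Finite C]
  [Finite C']

lemma natCard_le_eq_sum (f : C → P) (D : P) :
    Nat.card {c // f c ≤ D} = ∑ E ∈ Finset.Iic D, Nat.card {c // f c = E} := by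
  classical
  have := Fintype.ofFinite C
  simp only [Nat.card_eq_fintype_card, Fintype.card_subtype]
  rw [Finset.card_eq_sum_card_fiberwise (f := f) (t := Finset.Iic D) (by simp [Set.MapsTo])]
  refine Finset.sum_congr rfl fun E hE => congrArg Finset.card ?_
  rw [Finset.filter_filter]
  exact Finset.filter_congr fun c _ =>
    and_iff_right_of_imp fun h => h.le.trans (Finset.mem_Iic.1 hE)

theorem exists_equiv_of_natCard_le_eq {f : C → P} {g : C' → P}
    (h : ∀ D, Nat.card {c // f c ≤ D} = Nat.card {c // g c ≤ D}) :
    ∃ φ : C ≃ C', ∀ c, g (φ c) = f c := by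
  classical
  have hfiber (D : P) : Nat.card {c // f c = D} = Nat.card {c // g c = D} := by
    have hcast (D : P) : (Nat.card {c // f c ≤ D} : ℤ) = Nat.card {c // g c ≤ D} :=
      congrArg _ (h D)
    have hf := IncidenceAlgebra.moebius_inversion_bot (𝕜 := ℤ) _ _
      (fun D => (congrArg (Nat.cast (R := ℤ)) (natCard_le_eq_sum f D)).trans (Nat.cast_sum _ _)) D
    have hg := IncidenceAlgebra.moebius_inversion_bot (𝕜 := ℤ) _ _
      (fun D => (congrArg (Nat.cast (R := ℤ)) (natCard_le_eq_sum g D)).trans (Nat.cast_sum _ _)) D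
    simp only [hcast] at hf
    exact_mod_cast hf.trans hg.symm
  have φ (D : P) : {c // f c = D} ≃ {c // g c = D} := (Finite.card_eq.1 (hfiber D)).some
  exact ⟨Equiv.ofFiberEquiv φ, Equiv.ofFiberEquiv_map φ⟩

end Mobius

section Matching

open scoped Pointwise

variable {B B' W : Type*} [Group W] {M : CoxeterMatrix B} {M' : CoxeterMatrix B'}
  {cs : CoxeterSystem M W} {cs' : CoxeterSystem M' W}

lemma natCard_signChar_parabolic_le_ker [Finite B] (cs : CoxeterSystem M W) {ι : Type*}
    (T : ι → Set B) :
    Nat.card {χ : W →* ℤˣ // ∀ a, cs.parabolic (T a) ≤ χ.ker} =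
      2 ^ Nat.card {c : OddClass M // ∀ a, c ∉ oddClass M '' T a} := by
  classical
  let p (c : OddClass M) : Prop := ∃ a, c ∈ oddClass M '' T a
  have hker (f : OddClass M → ℤˣ) :
      f ∘ Subtype.val = (fun _ : {c // p c} => 1) ↔
        ∀ a, cs.parabolic (T a) ≤ (signCharEquiv cs f).ker := by
    simp only [parabolic_le_ker_signCharEquiv_iff, funext_iff, Subtype.forall, p]
    exact ⟨fun h a c hc => h c ⟨a, hc⟩, fun h c ⟨a, hc⟩ => h a c hc⟩
  have hequiv : {χ : W →* ℤˣ // ∀ a, cs.parabolic (T a) ≤ χ.ker} ≃ ({c // ¬ p c} → ℤˣ) :=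
    ((signCharEquiv cs).subtypeEquiv hker).symm.trans (Equiv.subtypePreimage p fun _ => 1)
  rw [Nat.card_congr hequiv, Nat.card_fun, Nat.card_eq_fintype_card (α := ℤˣ),
    Fintype.card_units_int]
  simp only [p, not_exists]

lemma ParabolicConj.le_ker_iff {T : Set B} {T' : Set B'} (h : ParabolicConj cs cs' T T')
    {A : Type*} [Group A] (χ : W →* A) :
    cs'.parabolic T' ≤ χ.ker ↔ cs.parabolic T ≤ χ.ker := by
  obtain ⟨g, hg⟩ := h
  rw [← hg, conjSubgroup_eq_smul]
  nth_rw 1 [← Subgroup.Normal.conj_smul_eq_self g χ.ker]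
  exact Subgroup.pointwise_smul_le_pointwise_smul_iff

/-- A bijection between the maximal spherical subsets of two Coxeter generating sets that matches
conjugate parabolic subgroups, with a bijection of odd classes preserving incidence. -/
structure Matching (cs : CoxeterSystem M W) (cs' : CoxeterSystem M' W) where
  equiv : MaxSpherical cs ≃ MaxSpherical cs'
  parabolicConj : ∀ T, ParabolicConj cs cs' T.1 (equiv T).1
  classEquiv : OddClass M ≃ OddClass M'
  mem_iff : ∀ T c, classEquiv c ∈ oddClass M' '' (equiv T).1 ↔ c ∈ oddClass M '' T.1

theorem nonempty_matching [Finite B] [Finite B'] (cs : CoxeterSystem M W)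
    (cs' : CoxeterSystem M' W) : Nonempty (Matching cs cs') := by
  classical
  obtain ⟨e, he⟩ := exists_equiv_parabolicConj cs cs'
  have := Fintype.ofFinite (MaxSpherical cs)
  let _ : LocallyFiniteOrder (Set (MaxSpherical cs)) := Fintype.toLocallyFiniteOrder
  let f (c : OddClass M) : Set (MaxSpherical cs) := {T | c ∈ oddClass M '' T.1}
  let g (c : OddClass M') : Set (MaxSpherical cs) := {T | c ∈ oddClass M' '' (e T).1}
  have hcount (D : Set (MaxSpherical cs)) :
      Nat.card {c // f c ≤ D} = Nat.card {c // g c ≤ D} := by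
    have h := natCard_signChar_parabolic_le_ker cs fun T : {T // T ∉ D} => T.1.1
    have h' := natCard_signChar_parabolic_le_ker cs' fun T : {T // T ∉ D} => (e T.1).1
    simp only [(he _).le_ker_iff] at h'
    have hle (p : MaxSpherical cs → Prop) : {T | p T} ≤ D ↔ ∀ T : {T // T ∉ D}, ¬ p T := by
      simp only [Subtype.forall, Set.subset_def, Set.mem_ofPred_eq, not_imp_not]
    rw [Nat.card_congr (Equiv.subtypeEquivRight fun c => hle _),
      Nat.card_congr (Equiv.subtypeEquivRight fun c => hle _)]
    exact Nat.pow_right_injective le_rfl (h.symm.trans h')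
  obtain ⟨φ, hφ⟩ := exists_equiv_of_natCard_le_eq hcount
  exact ⟨e, he, φ, fun T c => Set.ext_iff.1 (hφ c) T⟩

end Matching

section Conditions

variable {B W : Type*} [Group W] {M : CoxeterMatrix B} {cs : CoxeterSystem M W} {T : Set B}
  {i j k : B}

lemma IsOddPair.eq_pair (hT : IsOddPair M T) (hi : i ∈ T) (hj : j ∈ T) (hij : i ≠ j) :
    Odd (M i j) ∧ T = {i, j} := by
  obtain ⟨a, b, -, hodd, rfl⟩ := hT
  rcases hi with rfl | rfl <;> rcases hj with rfl | rfl
  · exact absurd rfl hij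
  · exact ⟨hodd, rfl⟩
  · exact ⟨M.symmetric _ _ ▸ hodd, Set.pair_comm _ _⟩
  · exact absurd rfl hij

lemma IsOddPair.exists_eq_pair (hT : IsOddPair M T) (hi : i ∈ T) :
    ∃ j, i ≠ j ∧ Odd (M i j) ∧ T = {i, j} := by
  have hnontriv : T.Nontrivial := by
    obtain ⟨a, b, hab, -, rfl⟩ := hT
    exact Set.nontrivial_pair hab
  obtain ⟨j, hj, hij⟩ := hnontriv.exists_ne i
  exact ⟨j, hij.symm, hT.eq_pair hi hj hij.symm⟩

lemma IsOddPair.not_isCommuting (hT : IsOddPair M T) : ¬ IsCommuting M T := by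
  obtain ⟨i, j, hij, hodd, rfl⟩ := hT
  exact fun h => h.not_odd (by simp) (by simp) hij hodd

lemma IsOddPair.isSpherical (hT : IsOddPair M T) (cs : CoxeterSystem M W) : cs.IsSpherical T := by
  obtain ⟨i, j, -, hodd, rfl⟩ := hT
  exact isSpherical_pair cs hodd.pos.ne'

lemma SphericalDichotomy.isMaxSpherical (h : SphericalDichotomy cs) (hT : IsOddPair M T) :
    cs.IsMaxSpherical T := by
  refine ⟨hT.isSpherical cs, fun U hU hTU => ?_⟩
  obtain ⟨i, j, hij, hodd, rfl⟩ := hT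
  obtain ⟨hi, hj⟩ := Set.pair_subset_iff.1 hTU
  exact (((h U hU).resolve_left fun hc => hc.not_odd hi hj hij hodd).eq_pair hi hj hij).2

/-- Every spherical subset is commuting or an odd pair, and different odd pairs involve different
odd classes: a formulation of conditions (0), (1) and (2) that does not depend on the Coxeter
generating set. -/
structure SeparatedOddPairs (cs : CoxeterSystem M W) : Prop where
  dichotomy : SphericalDichotomy cs
  eq_of_isOddPair : ∀ ⦃T U⦄, IsOddPair M T → IsOddPair M U →
    ∀ ⦃c⦄, c ∈ oddClass M '' T → c ∈ oddClass M '' U → T = U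

/-- In addition to `SeparatedOddPairs`, at most one commuting maximal spherical subset meets the
odd class of an odd pair: a formulation of condition (3) that does not depend on the Coxeter
generating set. -/
structure RigidityConditions (cs : CoxeterSystem M W) : Prop extends SeparatedOddPairs cs where
  eq_of_isCommuting : ∀ ⦃T⦄, IsOddPair M T → ∀ ⦃U V⦄, cs.IsMaxSpherical U → cs.IsMaxSpherical V →
    IsCommuting M U → IsCommuting M V →
    ∀ ⦃c⦄, c ∈ oddClass M '' T → c ∈ oddClass M '' U → c ∈ oddClass M '' V → U = V

lemma oddClass_eq_iff_of_trans (htrans : ∀ i j k, Odd (M i j) → Odd (M j k) → Odd (M i k)) :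
    oddClass M i = oddClass M j ↔ Odd (M i j) := by
  have hequiv : Equivalence fun i j => Odd (M i j) :=
    ⟨fun i => by simp, fun {i j} h => M.symmetric i j ▸ h, fun {i j k} => htrans i j k⟩
  exact ⟨fun h => hequiv.eqvGen_iff.1 (Quot.eqvGen_exact h), oddClass_eq_of_odd⟩

namespace SeparatedOddPairs

variable (h : SeparatedOddPairs cs)
include h

lemma odd_trans (hij : Odd (M i j)) (hjk : Odd (M j k)) : Odd (M i k) := by
  obtain rfl | hij' := eq_or_ne i j
  · exact hjk
  obtain rfl | hjk' := eq_or_ne j k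
  · exact hij
  have heq : ({i, j} : Set B) = {j, k} := h.eq_of_isOddPair ⟨i, j, hij', hij, rfl⟩
    ⟨j, k, hjk', hjk, rfl⟩ (c := oddClass M j) ⟨j, by simp, rfl⟩ ⟨j, by simp, rfl⟩
  obtain rfl : i = k := (heq ▸ Set.mem_insert i {j} : i ∈ ({j, k} : Set B)).resolve_left hij'
  simp

lemma oddClass_eq_iff : oddClass M i = oddClass M j ↔ Odd (M i j) :=
  oddClass_eq_iff_of_trans fun _ _ _ => h.odd_trans

lemma preimage_oddClass_eq (hT : IsOddPair M T) {c : OddClass M} (hc : c ∈ oddClass M '' T) :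
    oddClass M ⁻¹' {c} = T := by
  obtain ⟨i, hi, rfl⟩ := hc
  obtain ⟨j, -, hodd, rfl⟩ := hT.exists_eq_pair hi
  refine Set.Subset.antisymm (fun k hk => ?_) (Set.pair_subset rfl (oddClass_eq_of_odd hodd).symm)
  obtain rfl | hik := eq_or_ne i k
  · exact hi
  have hodd' : Odd (M i k) := h.oddClass_eq_iff.1 hk.symm
  rw [h.eq_of_isOddPair hT ⟨i, k, hik, hodd', rfl⟩ ⟨i, hi, rfl⟩ ⟨i, by simp, rfl⟩]
  simp

lemma subsingleton_preimage_oddClass {c : OddClass M}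
    (hc : ¬ ∃ T, IsOddPair M T ∧ c ∈ oddClass M '' T) : (oddClass M ⁻¹' {c}).Subsingleton := by
  rintro i rfl j hj
  by_contra hij
  exact hc ⟨{i, j}, ⟨i, j, hij, h.oddClass_eq_iff.1 hj.symm, rfl⟩, i, by simp, rfl⟩

open Classical in
lemma ncard_preimage_oddClass (c : OddClass M) :
    (oddClass M ⁻¹' {c}).ncard = if ∃ T, IsOddPair M T ∧ c ∈ oddClass M '' T then 2 else 1 := by
  split_ifs with hc
  · obtain ⟨T, hT, hc⟩ := hc
    rw [h.preimage_oddClass_eq hT hc]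
    obtain ⟨i, j, hij, -, rfl⟩ := hT
    exact Set.ncard_pair hij
  · obtain ⟨i, hi⟩ := oddClass_surjective c
    exact Set.ncard_eq_one.2 ⟨i, (h.subsingleton_preimage_oddClass hc).eq_singleton_of_mem hi⟩

end SeparatedOddPairs

lemma SphericalDichotomy.of_conditions (h0 : ∀ i j, M i j ≠ 0 → Even (M i j) → M i j = 2)
    (h1 : ∀ i j, i ≠ j → Odd (M i j) → cs.IsMaxSpherical {i, j}) : SphericalDichotomy cs := by
  refine fun T hT => or_iff_not_imp_right.2 fun hodd i hi j hj hij => ?_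
  refine h0 i j (ne_zero_of_isSpherical hT hi hj) (Nat.not_odd_iff_even.1 fun ho => hodd ?_)
  exact ⟨i, j, hij, ho, (h1 i j hij ho).2 T hT (Set.pair_subset hi hj)⟩

lemma SeparatedOddPairs.of_conditions (hd : SphericalDichotomy cs)
    (h2 : ∀ i j k, i ≠ j → j ≠ k → Odd (M i j) → Odd (M j k) → i = k) :
    SeparatedOddPairs cs := by
  refine ⟨hd, fun T U hT hU c hcT hcU => ?_⟩
  obtain ⟨i, hi, rfl⟩ := hcT
  obtain ⟨j, hj, hji⟩ := hcU
  have hodd : Odd (M j i) := by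
    refine (oddClass_eq_iff_of_trans fun i j k hij hjk => ?_).1 hji
    obtain rfl | hij' := eq_or_ne i j
    · exact hjk
    obtain rfl | hjk' := eq_or_ne j k
    · exact hij
    simp [h2 i j k hij' hjk' hij hjk]
  obtain ⟨i', hii', hi', rfl⟩ := hT.exists_eq_pair hi
  obtain ⟨j', hjj', hj', rfl⟩ := hU.exists_eq_pair hj
  obtain rfl | hne := eq_or_ne j i
  · rw [h2 i' j j' hii'.symm hjj' (M.symmetric _ _ ▸ hi') hj']
  · rw [← h2 j i i' hne hii' hodd hi', ← h2 i j j' hne.symm hjj' (M.symmetric _ _ ▸ hodd) hj',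
      Set.pair_comm]

theorem RigidityConditions.of_conditions [Finite B] (h : SeparatedOddPairs cs)
    (h3 : ∀ i j, i ≠ j → Odd (M i j) →
      {T : Set B | cs.IsMaxSpherical T ∧ (T ∩ {i, j}).Nonempty}.ncard ≤ 2) :
    RigidityConditions cs := by
  refine ⟨h, fun T hT U V hU hV hUc hVc c hcT hcU hcV => ?_⟩
  have hmeet {V : Set B} (hcV : c ∈ oddClass M '' V) : (V ∩ T).Nonempty := by
    obtain ⟨i, hi, hic⟩ := hcV
    exact ⟨i, hi, h.preimage_oddClass_eq hT hcT ▸ hic⟩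
  have hTmax := h.dichotomy.isMaxSpherical hT
  have hTU : T ≠ U := fun heq => hT.not_isCommuting (heq ▸ hUc)
  have hTV : T ≠ V := fun heq => hT.not_isCommuting (heq ▸ hVc)
  obtain ⟨i, j, hij, hodd, rfl⟩ := hT
  by_contra hUV
  have hsub : {{i, j}, U, V} ⊆ {T : Set B | cs.IsMaxSpherical T ∧ (T ∩ {i, j}).Nonempty} := by
    rintro _ (rfl | rfl | rfl)
    exacts [⟨hTmax, hmeet hcT⟩, ⟨hU, hmeet hcU⟩, ⟨hV, hmeet hcV⟩]
  have hcard := (Set.ncard_le_ncard hsub).trans (h3 i j hij hodd)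
  rw [Set.ncard_eq_three.2 ⟨_, _, _, hTU, hTV, hUV, rfl⟩] at hcard
  omega

end Conditions

section Sections

lemma exists_equiv_apply_eq {α β : Type*} (e : α ≃ β) (a : α) (b : β) : ∃ e' : α ≃ β, e' a = b := by
  classical
  exact ⟨e.trans (Equiv.swap (e a) b), by simp⟩

lemma exists_equiv_of_sections {B B' C : Type*} {f : B → C} {g : B' → C}
    (e : ∀ c, {i // f i = c} ≃ {j // g j = c}) {a : C → B} {b : C → B'}
    (ha : Function.RightInverse a f) (hb : Function.RightInverse b g) :
    ∃ ψ : B ≃ B', (∀ i, g (ψ i) = f i) ∧ ∀ c, ψ (a c) = b c := by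
  choose e' he' using fun c => exists_equiv_apply_eq (e c) ⟨a c, ha c⟩ ⟨b c, hb c⟩
  refine ⟨Equiv.ofFiberEquiv e', Equiv.ofFiberEquiv_map e', fun c => ?_⟩
  have hfiber (d : C) (h : f (a c) = d) : (e' d ⟨a c, h⟩ : B') = b c := by
    obtain rfl : c = d := (ha c).symm.trans h
    rw [he']
  exact hfiber _ rfl

end Sections

section Rigidity

variable {B B' W : Type*} [Group W] {M : CoxeterMatrix B} {M' : CoxeterMatrix B'}
  {cs : CoxeterSystem M W} {cs' : CoxeterSystem M' W}

lemma ParabolicConj.isCommuting_iff {T : Set B} {T' : Set B'} (h : ParabolicConj cs cs' T T') :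
    IsCommuting M T ↔ IsCommuting M' T' := by
  obtain ⟨g, hg⟩ := h
  obtain ⟨k, hk⟩ := ParabolicConj.symm ⟨g, hg⟩
  exact ⟨fun hT => hT.of_conjSubgroup_le hk.le, fun hT' => hT'.of_conjSubgroup_le hg.le⟩

lemma ParabolicConj.dvd {T : Set B} {T' : Set B'} (h : ParabolicConj cs cs' T T')
    (hT : IsOddPair M T) {i j : B} (hi : i ∈ T) (hj : j ∈ T) (hij : i ≠ j) {a b : B'}
    (ha : a ∈ T') (hb : b ∈ T') : M' a b ∣ M i j := by
  obtain ⟨hodd, rfl⟩ := hT.eq_pair hi hj hij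
  obtain ⟨g, hg⟩ := h.symm
  exact dvd_of_conjSubgroup_le hodd hg.le ha hb

lemma RigidityConditions.exists_section (h : RigidityConditions cs) :
    ∃ a : OddClass M → B, Function.RightInverse a (oddClass M) ∧
      ∀ T, cs.IsMaxSpherical T → IsCommuting M T → ∀ i ∈ T, a (oddClass M i) = i := by
  suffices h : ∀ c, ∃ a, oddClass M a = c ∧
      ∀ T, cs.IsMaxSpherical T → IsCommuting M T → ∀ i ∈ T, oddClass M i = c → a = i by
    choose a ha haT using h
    exact ⟨a, ha, fun T hT hTc i hi => haT _ T hT hTc i hi rfl⟩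
  intro c
  by_cases hc : ∃ U, cs.IsMaxSpherical U ∧ IsCommuting M U ∧ c ∈ oddClass M '' U
  · obtain ⟨U, hU, hUc, a, ha, rfl⟩ := hc
    refine ⟨a, rfl, fun T hT hTc i hi hia => ?_⟩
    have hodd : Odd (M a i) := h.oddClass_eq_iff.1 hia.symm
    by_contra hai
    obtain rfl : T = U := h.eq_of_isCommuting ⟨a, i, hai, hodd, rfl⟩ hT hU hTc hUc
      (c := oddClass M a) ⟨a, by simp, rfl⟩ ⟨i, hi, hia⟩ ⟨a, ha, rfl⟩
    exact hTc.not_odd ha hi hai hodd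
  · obtain ⟨a, ha⟩ := oddClass_surjective c
    exact ⟨a, ha, fun T hT hTc i hi hic => absurd ⟨T, hT, hTc, i, hi, hic⟩ hc⟩

lemma SeparatedOddPairs.mem_iff_of_isOddPair (h : SeparatedOddPairs cs) {T : Set B}
    (hT : IsOddPair M T) {i : B} : i ∈ T ↔ oddClass M i ∈ oddClass M '' T :=
  ⟨Set.mem_image_of_mem _, fun hi => h.preimage_oddClass_eq hT hi ▸ rfl⟩

lemma mem_iff_of_section {a : OddClass M → B} {T : Set B}
    (haT : ∀ i ∈ T, a (oddClass M i) = i) {i : B} :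
    i ∈ T ↔ oddClass M i ∈ oddClass M '' T ∧ a (oddClass M i) = i := by
  refine ⟨fun hi => ⟨Set.mem_image_of_mem _ hi, haT i hi⟩, fun ⟨⟨j, hj, hji⟩, hi⟩ => ?_⟩
  rwa [← hi, ← hji, haT j hj]

namespace Matching

variable (m : Matching cs cs')

lemma isOddPair_iff (hd : SphericalDichotomy cs) (hd' : SphericalDichotomy cs')
    (T : MaxSpherical cs) : IsOddPair M T.1 ↔ IsOddPair M' (m.equiv T).1 := by
  have hiff := (m.parabolicConj T).isCommuting_iff
  exact ⟨fun h => (hd' _ (m.equiv T).2.1).resolve_left fun hc => h.not_isCommuting (hiff.2 hc),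
    fun h => (hd _ T.2.1).resolve_left fun hc => h.not_isCommuting (hiff.1 hc)⟩

lemma exists_isOddPair_iff (hd : SphericalDichotomy cs) (hd' : SphericalDichotomy cs')
    (c : OddClass M) : (∃ T, IsOddPair M T ∧ c ∈ oddClass M '' T) ↔
      ∃ T', IsOddPair M' T' ∧ m.classEquiv c ∈ oddClass M' '' T' := by
  constructor
  · rintro ⟨T, hT, hc⟩
    exact ⟨_, (m.isOddPair_iff hd hd' ⟨T, hd.isMaxSpherical hT⟩).1 hT, (m.mem_iff _ c).2 hc⟩
  · rintro ⟨T', hT', hc⟩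
    obtain ⟨T, hT⟩ := m.equiv.surjective ⟨T', hd'.isMaxSpherical hT'⟩
    obtain rfl : (m.equiv T).1 = T' := congrArg Subtype.val hT
    exact ⟨T, (m.isOddPair_iff hd hd' T).2 hT', (m.mem_iff T c).1 hc⟩

include m in
theorem transfer (h : RigidityConditions cs) : RigidityConditions cs' := by
  have hd' : SphericalDichotomy cs' := h.dichotomy.transfer
  have hlift {T' : Set B'} (hT' : cs'.IsMaxSpherical T') : ∃ T, (m.equiv T).1 = T' := by
    obtain ⟨T, hT⟩ := m.equiv.surjective ⟨T', hT'⟩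
    exact ⟨T, congrArg Subtype.val hT⟩
  refine ⟨⟨hd', fun T' U' hT' hU' c' hcT hcU => ?_⟩,
    fun T' hT' U' V' hU' hV' hUc hVc c' hcT hcU hcV => ?_⟩
  all_goals
    obtain ⟨c, rfl⟩ := m.classEquiv.surjective c'
    obtain ⟨T, rfl⟩ := hlift (hd'.isMaxSpherical hT')
    replace hT' := (m.isOddPair_iff h.dichotomy hd' T).2 hT'
    rw [m.mem_iff] at hcT
  · obtain ⟨U, rfl⟩ := hlift (hd'.isMaxSpherical hU')
    rw [m.mem_iff] at hcU
    rw [Subtype.ext (h.eq_of_isOddPair hT' ((m.isOddPair_iff h.dichotomy hd' U).2 hU') hcT hcU)]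
  · obtain ⟨U, rfl⟩ := hlift hU'
    obtain ⟨V, rfl⟩ := hlift hV'
    rw [m.mem_iff] at hcU hcV
    rw [Subtype.ext (h.eq_of_isCommuting hT' U.2 V.2 ((m.parabolicConj U).isCommuting_iff.2 hUc)
      ((m.parabolicConj V).isCommuting_iff.2 hVc) hcT hcU hcV)]

lemma natCard_fiber_eq (h : SeparatedOddPairs cs) (h' : SeparatedOddPairs cs') (c : OddClass M) :
    Nat.card {i // oddClass M i = c} = Nat.card {i // oddClass M' i = m.classEquiv c} := by
  classical
  change (oddClass M ⁻¹' {c}).ncard = (oddClass M' ⁻¹' {m.classEquiv c}).ncard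
  rw [h.ncard_preimage_oddClass, h'.ncard_preimage_oddClass]
  exact if_congr (m.exists_isOddPair_iff h.dichotomy h'.dichotomy c) rfl rfl

theorem exists_equiv_mem_iff [Finite B] [Finite B'] (h : RigidityConditions cs)
    (h' : RigidityConditions cs') :
    ∃ ψ : B ≃ B', ∀ (T : MaxSpherical cs) (i : B), i ∈ T.1 ↔ ψ i ∈ (m.equiv T).1 := by
  obtain ⟨a, ha, haT⟩ := h.exists_section
  obtain ⟨b, hb, hbT⟩ := h'.exists_section
  have hcard (c : OddClass M) : Nat.card {i // oddClass M i = c} =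
      Nat.card {i // (m.classEquiv.symm ∘ oddClass M') i = c} := by
    rw [m.natCard_fiber_eq h.toSeparatedOddPairs h'.toSeparatedOddPairs]
    exact Nat.card_congr (Equiv.subtypeEquivRight fun _ => m.classEquiv.symm_apply_eq.symm)
  obtain ⟨ψ, hψ, hψab⟩ := exists_equiv_of_sections (b := b ∘ m.classEquiv)
    (fun c => (Finite.card_eq.1 (hcard c)).some) ha fun c => by simp [hb (m.classEquiv c)]
  have hclass (i : B) : oddClass M' (ψ i) = m.classEquiv (oddClass M i) :=
    m.classEquiv.symm_apply_eq.1 (hψ i)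
  refine ⟨ψ, fun T i => ?_⟩
  rcases h.dichotomy _ T.2.1 with hT | hT
  · have hT' := (m.parabolicConj T).isCommuting_iff.1 hT
    rw [mem_iff_of_section (haT _ T.2 hT), mem_iff_of_section (hbT _ (m.equiv T).2 hT'), hclass,
      m.mem_iff, ← Function.comp_apply (f := b), ← hψab, ψ.apply_eq_iff_eq]
  · have hT' := (m.isOddPair_iff h.dichotomy h'.dichotomy T).1 hT
    rw [h.mem_iff_of_isOddPair hT, h'.mem_iff_of_isOddPair hT', hclass, m.mem_iff]

lemma ne_zero_iff_of_mem_iff [Finite B] [Finite B'] {ψ : B → B'}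
    (hψ : ∀ (T : MaxSpherical cs) (i : B), i ∈ T.1 ↔ ψ i ∈ (m.equiv T).1) (i j : B) :
    M i j ≠ 0 ↔ M' (ψ i) (ψ j) ≠ 0 := by
  rw [← exists_isMaxSpherical_iff_ne_zero cs, ← exists_isMaxSpherical_iff_ne_zero cs']
  simpa only [Subtype.exists, exists_prop] using
    m.equiv.exists_congr (q := fun T' => ψ i ∈ T'.1 ∧ ψ j ∈ T'.1)
      fun T => and_congr (hψ T i) (hψ T j)

theorem exponent_eq_of_mem_iff [Finite B] [Finite B'] (hd : SphericalDichotomy cs) {ψ : B ≃ B'}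
    (hψ : ∀ (T : MaxSpherical cs) (i : B), i ∈ T.1 ↔ ψ i ∈ (m.equiv T).1) (i j : B) :
    M i j = M' (ψ i) (ψ j) := by
  obtain rfl | hij := eq_or_ne i j
  · simp
  have hij' : ψ i ≠ ψ j := ψ.injective.ne hij
  have hzero := m.ne_zero_iff_of_mem_iff hψ i j
  by_cases hex : M i j = 0
  · rw [hex, not_ne_iff.1 fun h => hzero.2 h hex]
  · obtain ⟨T, hTmax, hi, hj⟩ := (exists_isMaxSpherical_iff_ne_zero cs).2 hex
    lift T to MaxSpherical cs using hTmax
    have hi' := (hψ T i).1 hi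
    have hj' := (hψ T j).1 hj
    have hconj := m.parabolicConj T
    rcases hd _ T.2.1 with hT | hT
    · rw [hT hi hj hij, hconj.isCommuting_iff.1 hT hi' hj' hij']
    · have hT' := (m.isOddPair_iff hd hd.transfer T).1 hT
      exact Nat.dvd_antisymm (hconj.symm.dvd hT' hi' hj' hij' hi hj)
        (hconj.dvd hT hi hj hij hi' hj')

end Matching

end Rigidity

end CoxeterRigidity

/-- **Theorem (Hosaka).** Let `(W,S)` be a Coxeter system satisfying conditions (0)–(3).
Then `W` is rigid: any other Coxeter generating set `S'` of `W` is related to `S` by a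
bijection preserving the orders `m(s,t)` of products of pairs of generators.
(Here `orderOf x = 0` encodes infinite order.) -/
theorem rigid_of_conditions {B : Type*} [Fintype B] {W : Type*} [Group W]
    {M : CoxeterMatrix B} (cs : CoxeterSystem M W)
    (h0 : ∀ i j : B, orderOf (cs.simple i * cs.simple j) ≠ 0 →
      Even (orderOf (cs.simple i * cs.simple j)) → orderOf (cs.simple i * cs.simple j) = 2)
    (h1 : ∀ i j : B, i ≠ j → Odd (orderOf (cs.simple i * cs.simple j)) →
      cs.IsMaxSpherical {i, j})
    (h2 : ¬ ∃ i j k : B, i ≠ j ∧ j ≠ k ∧ i ≠ k ∧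
      Odd (orderOf (cs.simple i * cs.simple j)) ∧ Odd (orderOf (cs.simple j * cs.simple k)))
    (h3 : ∀ i j : B, i ≠ j → Odd (orderOf (cs.simple i * cs.simple j)) →
      {T : Set B | cs.IsMaxSpherical T ∧ (T ∩ {i, j}).Nonempty}.ncard ≤ 2) :
    ∀ (B' : Type*) [Fintype B'] (M' : CoxeterMatrix B') (cs' : CoxeterSystem M' W),
      ∃ ψ : B ≃ B', ∀ i j : B,
        orderOf (cs.simple i * cs.simple j)
          = orderOf (cs'.simple (ψ i) * cs'.simple (ψ j)) := by
  simp only [CoxeterRigidity.orderOf_simple_mul] at h0 h1 h2 h3 ⊢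
  intro B' _ M' cs'
  have hd := CoxeterRigidity.SphericalDichotomy.of_conditions h0 h1
  have hs := CoxeterRigidity.SeparatedOddPairs.of_conditions hd fun i j k hij hjk ho ho' =>
    by_contra fun hik => h2 ⟨i, j, k, hij, hjk, hik, ho, ho'⟩
  have h := CoxeterRigidity.RigidityConditions.of_conditions hs h3
  obtain ⟨m⟩ := CoxeterRigidity.nonempty_matching cs cs'
  obtain ⟨ψ, hψ⟩ := m.exists_equiv_mem_iff h (m.transfer h)
  exact ⟨ψ, m.exponent_eq_of_mem_iff hd hψ⟩
end

section
/- If (W,S) is a right-angled Coxeter system, i.e., m(s,t) ∈ {2, ∞} for all s ≠ t ∈ S, then the Coxeter group W is rigid: for every Coxeter generating set S' for W, there exists a bijection ψ : S → S' such that m(s,t) = m'(ψ(s),ψ(t)) for all s,t ∈ S. -/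
/-!
The right-angled Coxeter group `W` acts faithfully on `ℤ^B` by matrices congruent to `1` modulo `2`,
so by Minkowski's argument its elements of finite order square to `1`. Products of two distinct
simple reflections of any other Coxeter system of `W` therefore have order `2` or `∞`: that system
is right-angled too, and it remains to compare the graphs of commuting generators.

The generators form an `𝔽₂`-basis `e` of the abelianization, and the set `X` of classes of
involutions, which depends on `W` only, consists of the sums of the `e i` over cliques: killing all
generators except two non-commuting ones maps `W` onto an infinite dihedral group, where an element
in which both generators occur with odd parity is a nontrivial translation, hence not an involution.
For `v ∈ X` put `N v = {w ∈ X | v + w ∈ X}`. Then `i` and `j` are adjacent if and only if `i ≠ j`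
and `e j ∈ N (e i)`, and `N v ⊆ N (e i)` for `i` in the support of `v`. Hence the span of the
`v ∈ X` with `T ⊆ N v` is spanned by the `e i` it contains, and the number of `i` with `N (e i) = T`
is the dimension of its quotient by the span for `T ⊂ N v`. Two bases with the same `X` thus admit a
bijection preserving `N`, and this bijection is a graph isomorphism.
-/

section Reflections

open Polynomial Module

theorem chebyshevS_eval_mul_sin (k : ℤ) (φ : ℝ) :
    (Chebyshev.S ℝ k).eval (2 * Real.cos φ) * Real.sin φ = Real.sin ((k + 1) * φ) := by
  rw [← Chebyshev.U_real_cos, ← Chebyshev.S_comp_two_mul_X]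
  simp

theorem chebyshevS_eval_two_mul_cos_eq_zero {k : ℤ} {φ : ℝ} (hφ : Real.sin φ ≠ 0)
    (h : Real.sin ((k + 1) * φ) = 0) : (Chebyshev.S ℝ k).eval (2 * Real.cos φ) = 0 :=
  (mul_eq_zero.mp ((chebyshevS_eval_mul_sin k φ).trans h)).resolve_right hφ

theorem chebyshevS_eval_add_eval_sub_one_eq_zero {k : ℤ} {φ : ℝ} (hφ : Real.sin φ ≠ 0)
    (h : Real.sin ((2 * k + 1) * φ / 2) = 0) :
    (Chebyshev.S ℝ k).eval (2 * Real.cos φ) + (Chebyshev.S ℝ (k - 1)).eval (2 * Real.cos φ)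
      = 0 := by
  refine (mul_eq_zero.mp (?_ : _ * Real.sin φ = 0)).resolve_right hφ
  rw [add_mul, chebyshevS_eval_mul_sin, chebyshevS_eval_mul_sin, Real.sin_add_sin]
  have hsum : ((k : ℝ) + 1) * φ + (((k - 1 : ℤ) : ℝ) + 1) * φ = (2 * k + 1) * φ := by
    push_cast; ring
  rw [hsum, h, mul_zero, zero_mul]

variable {V : Type*} [AddCommGroup V] [Module ℝ V] {x y : V} {f g : Dual ℝ V}

theorem reflection_mul_reflection_pow_eq_one_of_chebyshev (hf : f x = 2) (hg : g y = 2) {m : ℕ}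
    {φ : ℝ} (hφ : Real.sin φ ≠ 0) (hm : Real.sin (m * φ / 2) = 0)
    (ht : 2 * Real.cos φ = f y * g x - 2) :
    (reflection hf * reflection hg) ^ m = 1 := by
  ext z
  rw [reflection_mul_reflection_pow_apply hf hg m z _ ht]
  obtain ⟨n, rfl | rfl⟩ := Nat.even_or_odd' m
  · have hS : (Chebyshev.S ℝ ((n : ℤ) - 1)).eval (2 * Real.cos φ) = 0 :=
      chebyshevS_eval_two_mul_cos_eq_zero hφ (by rw [← hm]; push_cast; congr 1; ring)
    rw [show (((2 * n : ℕ) : ℤ) - 2) / 2 = n - 1 by lia,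
      show (((2 * n : ℕ) : ℤ) - 1) / 2 = n - 1 by lia, hS]
    simp
  · have hS : (Chebyshev.S ℝ (n : ℤ)).eval (2 * Real.cos φ) +
        (Chebyshev.S ℝ ((n : ℤ) - 1)).eval (2 * Real.cos φ) = 0 :=
      chebyshevS_eval_add_eval_sub_one_eq_zero hφ (by rw [← hm]; push_cast; rfl)
    rw [show (((2 * n + 1 : ℕ) : ℤ) - 2) / 2 = n - 1 by lia,
      show (((2 * n + 1 : ℕ) : ℤ) - 1) / 2 = n by lia,
      show (((2 * n + 1 : ℕ) : ℤ) - 3) / 2 = n - 1 by lia,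
      show (((2 * n + 1 : ℕ) : ℤ)) / 2 = n by lia, hS]
    simp

theorem reflection_mul_reflection_sq_eq_one (hf : f x = 2) (hg : g y = 2) (hfy : f y = 0)
    (hgx : g x = 0) : (reflection hf * reflection hg) ^ 2 = 1 := by
  ext z
  simp only [pow_two, LinearEquiv.mul_apply, reflection_apply, map_sub, map_smul, hf, hg, hfy,
    hgx, LinearEquiv.coe_one, id]
  module

theorem reflection_mul_reflection_pow_eq_one (hf : f x = 2) (hg : g y = 2) {m : ℕ} (hm : 2 ≤ m)
    (hfy : f y = -(2 * Real.cos (Real.pi / m))) (hgx : g x = -(2 * Real.cos (Real.pi / m))) :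
    (reflection hf * reflection hg) ^ m = 1 := by
  obtain rfl | hm3 := hm.eq_or_lt'
  · exact reflection_mul_reflection_sq_eq_one hf hg (by simpa using hfy) (by simpa using hgx)
  · have hm0 : (3 : ℝ) ≤ m := by exact_mod_cast hm3
    refine reflection_mul_reflection_pow_eq_one_of_chebyshev hf hg
      (φ := 2 * (Real.pi / m)) ?_ ?_ (by rw [hfy, hgx, Real.cos_two_mul]; ring)
    · refine (Real.sin_pos_of_pos_of_lt_pi (by positivity) ?_).ne'
      have : Real.pi / m < Real.pi / 2 := by gcongr; linarith
      linarith
    · rw [show (m : ℝ) * (2 * (Real.pi / m)) / 2 = Real.pi by field_simp, Real.sin_pi]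

end Reflections

section GeometricRepresentation

open Module

variable {B : Type*} (M : CoxeterMatrix B)

/-- The coroot `2 ⟪eᵢ, ·⟫` of the geometric representation of the Coxeter group of `M` on `ℝ^(B)`.
An infinite order `M i j = 0` gets the usual coefficient `-2`, since `π / 0 = 0`. -/
noncomputable def coxeterCoroot (i : B) : Dual ℝ (B →₀ ℝ) :=
  Finsupp.linearCombination ℝ fun j => -(2 * Real.cos (Real.pi / M i j))

theorem coxeterCoroot_single (i j : B) :
    coxeterCoroot M i (.single j 1) = -(2 * Real.cos (Real.pi / M i j)) := by
  simp [coxeterCoroot]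

theorem coxeterCoroot_single_self (i : B) : coxeterCoroot M i (.single i 1) = 2 := by
  simp [coxeterCoroot]

theorem isLiftable_reflection_coxeterCoroot :
    M.IsLiftable fun i => reflection (coxeterCoroot_single_self M i) := by
  intro i j
  obtain rfl | hij := eq_or_ne i j
  · ext1 z
    simpa using involutive_reflection (coxeterCoroot_single_self M i) z
  obtain hM | hM := eq_or_ne (M i j) 0
  · rw [hM, pow_zero]
  · have hM1 := M.off_diagonal i j hij
    exact reflection_mul_reflection_pow_eq_one _ _ (by lia) (coxeterCoroot_single M i j)
      (by rw [coxeterCoroot_single, M.symmetric j i])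

variable {M} in
theorem coxeterSystem_simple_injective {W : Type*} [Group W] (cs : CoxeterSystem M W) :
    Function.Injective cs.simple := by
  intro i j hij
  by_contra hne
  have hlift := cs.lift_apply_simple (isLiftable_reflection_coxeterCoroot M)
  have href : reflection (coxeterCoroot_single_self M i)
      = reflection (coxeterCoroot_single_self M j) := by
    rw [← hlift i, hij, hlift j]
  have hcoord := DFunLike.congr_fun (LinearEquiv.congr_fun href (.single i 1)) i
  rw [reflection_apply_self, reflection_apply] at hcoord
  norm_num [Finsupp.single_apply, Ne.symm hne] at hcoord

end GeometricRepresentation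

section Minkowski

theorem eq_zero_of_forall_eq_two_mul {α : Type*} {f : α → ℤ} {d : α → α}
    (h : ∀ a, f a = 2 * f (d a)) : f = 0 := by
  suffices ∀ n a, (f a).natAbs = n → f a = 0 from funext fun a => this _ a rfl
  intro n
  induction n using Nat.strong_induction_on with
  | _ n ih =>
    intro a ha
    have hfa := h a
    by_contra hne
    have hda : f (d a) = 0 := ih _ (by lia) (d a) rfl
    lia

variable {ι : Type*} {g u x : Module.End ℤ (ι → ℤ)}

theorem eq_zero_of_mul_eq_zero_of_two_dvd_sub_one (hu : 2 ∣ u - 1) (h : x * u = 0) : x = 0 := by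
  obtain ⟨d, hd⟩ := hu
  have hx : x = 2 * (x * -d) := by
    have hxu : x * u = x + 2 * (x * d) := by rw [sub_eq_iff_eq_add'.mp hd]; noncomm_ring
    rw [mul_neg, mul_neg, eq_neg_iff_add_eq_zero, ← hxu, h]
  have hcoord (a : (ι → ℤ) × ι) : x a.1 a.2 = 2 * x (-d a.1) a.2 := by
    conv_lhs => rw [hx]
    simp [two_mul]
  have hzero := eq_zero_of_forall_eq_two_mul (f := fun a : (ι → ℤ) × ι => x a.1 a.2)
    (d := fun a => (-d a.1, a.2)) hcoord
  exact LinearMap.ext fun v => funext fun i => congrFun hzero (v, i)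

theorem eq_one_of_pow_eq_one_of_odd (hg : 2 ∣ g - 1) {n : ℕ} (hn : Odd n) (h : g ^ n = 1) :
    g = 1 := by
  have hsum : 2 ∣ (∑ i ∈ Finset.range n, g ^ i) - 1 := by
    obtain ⟨k, rfl⟩ := hn
    have hsplit : (∑ i ∈ Finset.range (2 * k + 1), g ^ i) - 1
        = ∑ i ∈ Finset.range (2 * k + 1), (g ^ i - 1) + 2 * k := by
      simp [Finset.sum_sub_distrib, sub_add_eq_sub_sub_swap]
    rw [hsplit]
    exact dvd_add (Finset.dvd_sum fun i _ => hg.trans (sub_one_dvd_pow_sub_one g i))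
      (dvd_mul_right 2 _)
  refine sub_eq_zero.mp (eq_zero_of_mul_eq_zero_of_two_dvd_sub_one hsum ?_)
  rw [mul_geom_sum, h, sub_self]

theorem sq_eq_one_of_pow_four_eq_one (hg : 2 ∣ g - 1) (h : g ^ 4 = 1) : g ^ 2 = 1 := by
  obtain ⟨d, hd⟩ := hg
  have hu : 2 ∣ (1 + 2 * (d + d ^ 2)) - 1 := ⟨d + d ^ 2, add_sub_cancel_left _ _⟩
  have hmul : 2 * (g ^ 2 - 1) * (1 + 2 * (d + d ^ 2)) = g ^ 4 - 1 := by
    rw [sub_eq_iff_eq_add'.mp hd]; noncomm_ring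
  have htwo : 2 * (g ^ 2 - 1) = 0 :=
    eq_zero_of_mul_eq_zero_of_two_dvd_sub_one hu (by rw [hmul, h, sub_self])
  rw [two_mul, ← two_nsmul] at htwo
  exact sub_eq_zero.mp ((smul_eq_zero.mp htwo).resolve_left two_ne_zero)

theorem sq_eq_one_of_isOfFinOrder {G : Type*} [Group G] {ρ : G →* Module.End ℤ (ι → ℤ)}
    (hρ : Function.Injective ρ) (hρ2 : ∀ g, 2 ∣ ρ g - 1) {g : G} (hg : IsOfFinOrder g) :
    g ^ 2 = 1 := by
  have hodd (h : G) (n : ℕ) (hn : Odd n) (hh : h ^ n = 1) : h = 1 :=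
    (map_eq_one_iff ρ hρ).mp
      (eq_one_of_pow_eq_one_of_odd (hρ2 h) hn (by rw [← map_pow, hh, map_one]))
  have hfour (h : G) (hh : h ^ 4 = 1) : h ^ 2 = 1 := by
    rw [← map_eq_one_iff ρ hρ, map_pow]
    exact sq_eq_one_of_pow_four_eq_one (hρ2 h) (by rw [← map_pow, hh, map_one])
  have hpos : orderOf g ≠ 0 := hg.orderOf_pos.ne'
  have hpow {m : ℕ} (hm : m ∣ orderOf g) : orderOf (g ^ (orderOf g / m)) = m :=
    orderOf_pow_orderOf_div hpos hm
  suffices orderOf g ∣ 2 from orderOf_dvd_iff_pow_eq_one.mp this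
  by_contra hdvd
  have htwo : 2 < orderOf g := by
    by_contra hle
    interval_cases h : orderOf g <;> simp_all
  obtain h4 | ⟨p, hp, hpdvd, hpodd⟩ := Nat.four_dvd_or_exists_odd_prime_and_dvd_of_two_lt htwo
  · have := orderOf_dvd_of_pow_eq_one (hfour _ (hpow h4 ▸ pow_orderOf_eq_one _))
    rw [hpow h4] at this
    lia
  · have := orderOf_eq_one_iff.mpr (hodd _ p hpodd (hpow hpdvd ▸ pow_orderOf_eq_one _))
    exact hp.one_lt.ne' ((hpow hpdvd).symm.trans this)

end Minkowski

section CommuteSimple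

variable {B W : Type*} [Group W] {M : CoxeterMatrix B} (cs : CoxeterSystem M W)

theorem commute_simple_iff_sq_eq_one {i j : B} :
    Commute (cs.simple i) (cs.simple j) ↔ (cs.simple i * cs.simple j) ^ 2 = 1 := by
  rw [pow_two, mul_eq_one_iff_eq_inv, mul_inv_rev, cs.inv_simple, cs.inv_simple]
  rfl

theorem not_isLeftDescent_simple_mul_of_commute {w : W} {i j : B}
    (hcomm : Commute (cs.simple i) (cs.simple j)) (hi : ¬ cs.IsLeftDescent w i)
    (hj : cs.IsLeftDescent w j) : ¬ cs.IsLeftDescent (cs.simple j * w) i := by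
  rw [CoxeterSystem.IsLeftDescent, hcomm.left_comm]
  have hlen := cs.length_simple_mul (cs.simple i * w) j
  rw [cs.not_isLeftDescent_iff] at hi
  rw [cs.isLeftDescent_iff] at hj
  lia

end CommuteSimple

/-- A Coxeter system is right-angled if the product of two distinct simple reflections has order `2`
or infinite order (`orderOf _ = 0`). The orders are those in `W`, not the entries of `M`. -/
def IsRightAngled {B W : Type*} [Group W] {M : CoxeterMatrix B} (cs : CoxeterSystem M W) : Prop :=
  ∀ i j : B, i ≠ j → orderOf (cs.simple i * cs.simple j) = 2 ∨
    orderOf (cs.simple i * cs.simple j) = 0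

namespace IsRightAngled

variable {B W : Type*} [Group W] {M : CoxeterMatrix B} {cs : CoxeterSystem M W}

open Classical in
theorem orderOf_simple_mul_simple (hra : IsRightAngled cs) {i j : B} (hij : i ≠ j) :
    orderOf (cs.simple i * cs.simple j) = if Commute (cs.simple i) (cs.simple j) then 2 else 0 := by
  obtain h | h := hra i j hij
  · rw [if_pos ((commute_simple_iff_sq_eq_one cs).mpr (orderOf_dvd_iff_pow_eq_one.mp h.dvd)), h]
  · rw [if_neg, h]
    rw [commute_simple_iff_sq_eq_one, ← orderOf_dvd_iff_pow_eq_one, h]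
    lia

theorem isLiftable (hra : IsRightAngled cs) {G : Type*} [Monoid G] {f : B → G}
    (hf : ∀ i, f i * f i = 1)
    (hcomm : ∀ i j, Commute (cs.simple i) (cs.simple j) → Commute (f i) (f j)) :
    M.IsLiftable f := by
  intro i j
  obtain rfl | hij := eq_or_ne i j
  · rw [M.diagonal, pow_one, hf]
  have hdvd := orderOf_dvd_of_pow_eq_one (cs.simple_mul_simple_pow i j)
  rw [hra.orderOf_simple_mul_simple hij] at hdvd
  split_ifs at hdvd with h
  · obtain ⟨k, hk⟩ := hdvd
    rw [hk, pow_mul, (hcomm i j h).mul_pow, pow_two, pow_two, hf, hf, one_mul, one_pow]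
  · rw [zero_dvd_iff.mp hdvd, pow_zero]

end IsRightAngled

section IntegralRepresentation

open Module

variable {B W : Type*} [Group W] {M : CoxeterMatrix B} {cs : CoxeterSystem M W}

open Classical in
/-- The vector `(2 ⟪eᵢ, eⱼ⟫)ⱼ` for the bilinear form of a right-angled Coxeter system: together with
the `i`-th coordinate functional it defines the reflection by which `s i` acts on `ℤ^B`, the lattice
dual to the one of the geometric representation. -/
noncomputable def rightAngledRoot (cs : CoxeterSystem M W) (i : B) : B → ℤ := fun j =>
  if j = i then 2 else if Commute (cs.simple i) (cs.simple j) then 0 else -2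

theorem rightAngledRoot_self (i : B) : rightAngledRoot cs i i = 2 := by
  simp [rightAngledRoot]

theorem rightAngledRoot_of_commute {i j : B} (hij : i ≠ j)
    (h : Commute (cs.simple i) (cs.simple j)) : rightAngledRoot cs i j = 0 := by
  simp [rightAngledRoot, hij.symm, h]

theorem rightAngledRoot_of_not_commute {i j : B} (h : ¬ Commute (cs.simple i) (cs.simple j)) :
    rightAngledRoot cs i j = -2 := by
  have hij : j ≠ i := by rintro rfl; exact h (.refl _)
  simp [rightAngledRoot, hij, h]

theorem two_dvd_rightAngledRoot (i j : B) : 2 ∣ rightAngledRoot cs i j := by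
  unfold rightAngledRoot
  split_ifs <;> decide

theorem commute_preReflection {R N : Type*} [CommRing R] [AddCommGroup N] [Module R N] {x y : N}
    {f g : Dual R N} (hfy : f y = 0) (hgx : g x = 0) :
    Commute (preReflection x f) (preReflection y g) := by
  ext z
  simp only [Module.End.mul_apply, preReflection_apply, map_sub, map_smul, hfy, hgx]
  module

theorem two_dvd_preReflection_sub_one {ι : Type*} {x : ι → ℤ} (hx : ∀ i, 2 ∣ x i)
    (f : Dual ℤ (ι → ℤ)) : 2 ∣ preReflection x f - 1 := by
  choose y hy using hx
  refine ⟨-f.smulRight y, LinearMap.ext fun v => funext fun i => ?_⟩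
  simp [preReflection_apply, two_mul, hy]
  ring

namespace IsRightAngled

theorem isLiftable_preReflection (hra : IsRightAngled cs) :
    M.IsLiftable fun i =>
      preReflection (rightAngledRoot cs i) (LinearMap.proj (R := ℤ) (φ := fun _ : B => ℤ) i) := by
  refine hra.isLiftable (fun i => LinearMap.ext <| involutive_preReflection ?_) fun i j h => ?_
  · exact rightAngledRoot_self i
  obtain rfl | hij := eq_or_ne i j
  · exact .refl _
  · exact commute_preReflection (rightAngledRoot_of_commute hij.symm h.symm)
      (rightAngledRoot_of_commute hij h)

/-- The integral representation of a right-angled Coxeter group on `ℤ^B`, dual to the geometric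
representation. -/
noncomputable def rep (hra : IsRightAngled cs) : W →* End ℤ (B → ℤ) :=
  cs.lift ⟨_, hra.isLiftable_preReflection⟩

theorem rep_simple (hra : IsRightAngled cs) (i : B) :
    hra.rep (cs.simple i) = preReflection (rightAngledRoot cs i) (LinearMap.proj i) :=
  cs.lift_apply_simple hra.isLiftable_preReflection i

theorem rep_apply_eq_sub (hra : IsRightAngled cs) (w : W) (v : B → ℤ) (i j : B) :
    hra.rep w v j = hra.rep (cs.simple i * w) v j
      - hra.rep (cs.simple i * w) v i * rightAngledRoot cs i j := by
  conv_lhs => rw [← cs.simple_mul_simple_cancel_left (w := w) i, map_mul, rep_simple]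
  rfl

theorem rep_one_pos_of_isLeftDescent (hra : IsRightAngled cs) {w : W} {i t : B}
    (hi : ¬ cs.IsLeftDescent w i) (ht : cs.IsLeftDescent w t)
    (hpos : ∀ k, ¬ cs.IsLeftDescent (cs.simple t * w) k → 0 < hra.rep (cs.simple t * w) 1 k)
    (hadd : ¬ Commute (cs.simple i) (cs.simple t) →
      0 < hra.rep (cs.simple t * w) 1 i + hra.rep (cs.simple t * w) 1 t) :
    0 < hra.rep w 1 i := by
  have hti : t ≠ i := by rintro rfl; exact hi ht
  rw [hra.rep_apply_eq_sub w 1 t i]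
  by_cases h : Commute (cs.simple i) (cs.simple t)
  · rw [rightAngledRoot_of_commute hti h.symm, mul_zero, sub_zero]
    exact hpos i (not_isLeftDescent_simple_mul_of_commute cs h hi ht)
  · rw [rightAngledRoot_of_not_commute (mt Commute.symm h)]
    linarith [hadd h, hpos t (cs.isLeftDescent_iff_not_isLeftDescent_mul.mp ht)]

/-- The second conjunct strengthens the induction: for non-commuting `s i` and `s j` the sum of the
two coordinates is invariant under `s i` and `s j`, while each coordinate can change sign. -/
theorem rep_one_pos_and_add_pos (hra : IsRightAngled cs) (w : W) :
    (∀ i, ¬ cs.IsLeftDescent w i → 0 < hra.rep w 1 i) ∧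
      ∀ i j, ¬ Commute (cs.simple i) (cs.simple j) → ¬ cs.IsLeftDescent w j →
        0 < hra.rep w 1 i + hra.rep w 1 j := by
  induction hn : cs.length w using Nat.strong_induction_on generalizing w with
  | _ n ih =>
    subst hn
    replace ih {t : B} (ht : cs.IsLeftDescent w t) := ih _ ht (cs.simple t * w) rfl
    have hpos (i : B) (hi : ¬ cs.IsLeftDescent w i) : 0 < hra.rep w 1 i := by
      obtain rfl | hw := eq_or_ne w 1
      · simp
      obtain ⟨t, ht⟩ := cs.exists_leftDescent_of_ne_one hw
      exact hra.rep_one_pos_of_isLeftDescent hi ht (ih ht).1 fun h =>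
        (ih ht).2 i t h (cs.isLeftDescent_iff_not_isLeftDescent_mul.mp ht)
    refine ⟨hpos, fun i j h hj => ?_⟩
    by_cases hi : cs.IsLeftDescent w i
    · have hadd := (ih hi).2 j i (mt Commute.symm h)
        (cs.isLeftDescent_iff_not_isLeftDescent_mul.mp hi)
      rw [hra.rep_apply_eq_sub w 1 i i, hra.rep_apply_eq_sub w 1 i j, rightAngledRoot_self,
        rightAngledRoot_of_not_commute h]
      linarith
    · exact add_pos (hpos i hi) (hpos j hj)

theorem rep_one_neg_of_isLeftDescent (hra : IsRightAngled cs) {w : W} {i : B}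
    (hi : cs.IsLeftDescent w i) : hra.rep w 1 i < 0 := by
  have hpos := (hra.rep_one_pos_and_add_pos (cs.simple i * w)).1 i
    (cs.isLeftDescent_iff_not_isLeftDescent_mul.mp hi)
  rw [hra.rep_apply_eq_sub w 1 i i, rightAngledRoot_self]
  linarith

theorem rep_injective (hra : IsRightAngled cs) : Function.Injective hra.rep := by
  refine (injective_iff_map_eq_one _).mpr fun w hw => ?_
  by_contra hne
  obtain ⟨i, hi⟩ := cs.exists_leftDescent_of_ne_one hne
  have hneg := hra.rep_one_neg_of_isLeftDescent hi
  simp [hw] at hneg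

theorem two_dvd_rep_sub_one (hra : IsRightAngled cs) (w : W) : 2 ∣ hra.rep w - 1 := by
  induction w using cs.simple_induction_left with
  | one => simp
  | mul_simple_left w i ih =>
    have hi : 2 ∣ hra.rep (cs.simple i) - 1 :=
      hra.rep_simple i ▸ two_dvd_preReflection_sub_one (two_dvd_rightAngledRoot i) _
    have hmul : hra.rep (cs.simple i * w) - 1
        = (hra.rep (cs.simple i) - 1) * hra.rep w + (hra.rep w - 1) := by
      rw [map_mul]; noncomm_ring
    rw [hmul]
    exact dvd_add (hi.mul_right _) ih

theorem sq_eq_one (hra : IsRightAngled cs) {w : W} (hw : IsOfFinOrder w) : w ^ 2 = 1 :=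
  sq_eq_one_of_isOfFinOrder hra.rep_injective hra.two_dvd_rep_sub_one hw

theorem of_coxeterSystem (hra : IsRightAngled cs) {B' : Type*} {M' : CoxeterMatrix B'}
    (cs' : CoxeterSystem M' W) : IsRightAngled cs' := by
  intro i j hij
  by_cases hfin : IsOfFinOrder (cs'.simple i * cs'.simple j)
  · refine .inl (orderOf_eq_prime (hra.sq_eq_one hfin) fun h => hij ?_)
    rw [mul_eq_one_iff_eq_inv, cs'.inv_simple] at h
    exact coxeterSystem_simple_injective cs' h
  · exact .inr (orderOf_eq_zero_iff.mpr hfin)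

end IsRightAngled

end IntegralRepresentation

section CliqueBasis

open Module Submodule

variable {B K V : Type*} [Ring K] [AddCommGroup V] [Module K V]

theorem nonempty_basis_map_mkQ_span_image {v : B → V} (hv : LinearIndependent K v)
    (s t : Set B) :
    Nonempty (Basis (s \ t : Set B) K ((span K (v '' s)).map (span K (v '' t)).mkQ)) := by
  have hdisj : Disjoint (span K (Set.range fun i : (s \ t : Set B) => v i))
      (LinearMap.ker (span K (v '' t)).mkQ) := by
    rw [ker_mkQ, ← Set.image_eq_range]
    exact hv.disjoint_span_image disjoint_sdiff_self_left
  have hspan : span K (Set.range fun i : (s \ t : Set B) => (span K (v '' t)).mkQ (v i))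
      = (span K (v '' s)).map (span K (v '' t)).mkQ := by
    rw [← Set.image_eq_range (fun i => (span K (v '' t)).mkQ (v i)) (s \ t),
      ← Set.image_image (span K (v '' t)).mkQ v, span_image]
    refine le_antisymm (map_mono (span_mono (Set.image_mono Set.sdiff_subset))) ?_
    have hle : span K (v '' s) ≤ span K (v '' (s \ t)) ⊔ span K (v '' t) := by
      rw [← span_union, ← Set.image_union, Set.sdiff_union_self]
      exact span_mono (Set.image_mono Set.subset_union_left)
    exact (map_mono hle).trans (by simp [Submodule.map_sup])
  exact ⟨(Basis.span ((hv.comp _ Subtype.val_injective).map hdisj)).map (.ofEq _ _ hspan)⟩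

theorem support_repr_basis_self [Nontrivial K] (b : Basis B K V) (i : B) :
    (b.repr (b i)).support = {i} := by
  rw [b.repr_self, Finsupp.support_single _ one_ne_zero]

/-- A basis `b` indexed by the vertices of a graph `G` is a clique basis for `X` if `X` consists of
the vectors supported on a clique of `G`. -/
def IsCliqueBasis (G : SimpleGraph B) (b : Basis B K V) (X : Set V) : Prop :=
  ∀ v, v ∈ X ↔ G.IsClique ((b.repr v).support : Set B)

/-- The translation neighbours of `v` in `X`. For vectors of a clique basis this is an invariant of
`v` that recovers adjacency from `X` and addition alone. -/
def addNeighbors (X : Set V) (v : V) : Set V := {w ∈ X | v + w ∈ X}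

theorem mem_addNeighbors_comm {X : Set V} {v w : V} (hv : v ∈ X) (hw : w ∈ X) :
    w ∈ addNeighbors X v ↔ v ∈ addNeighbors X w := by
  simp [addNeighbors, hv, hw, add_comm]

namespace IsCliqueBasis

variable {G : SimpleGraph B} {b : Basis B K V} {X : Set V}

theorem add_mem_iff (h : IsCliqueBasis G b X) {v w : V} (hv : v ∈ X) (hw : w ∈ X) :
    v + w ∈ X ↔ G.IsClique ((b.repr v).support ∪ (b.repr w).support : Set B) := by
  classical
  have := G.symm
  refine ⟨fun hvw => (Set.pairwise_union_of_symm).mpr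
    ⟨(h v).mp hv, (h w).mp hw, fun i hi j hj hij => ?_⟩, fun hvw => (h _).mpr (hvw.subset ?_)⟩
  · by_cases hi' : i ∈ (b.repr w).support
    · exact (h w).mp hw hi' hj hij
    by_cases hj' : j ∈ (b.repr v).support
    · exact (h v).mp hv hi hj' hij
    refine (h _).mp hvw ?_ ?_ hij <;> simp_all
  · rw [map_add]
    exact_mod_cast Finsupp.support_add

theorem mem_addNeighbors_iff (h : IsCliqueBasis G b X) {v w : V} (hv : v ∈ X) :
    w ∈ addNeighbors X v ↔
      G.IsClique ((b.repr v).support ∪ (b.repr w).support : Set B) :=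
  ⟨fun hw => (h.add_mem_iff hv hw.1).mp hw.2, fun hvw =>
    have hw : w ∈ X := (h w).mpr (hvw.subset Set.subset_union_right)
    ⟨hw, (h.add_mem_iff hv hw).mpr hvw⟩⟩

section Nontrivial

variable [Nontrivial K]

theorem basis_mem (h : IsCliqueBasis G b X) (i : B) : b i ∈ X := by
  rw [h, support_repr_basis_self, Finset.coe_singleton]
  exact Set.pairwise_singleton i _

theorem addNeighbors_subset (h : IsCliqueBasis G b X) {v : V} (hv : v ∈ X) {i : B}
    (hi : i ∈ (b.repr v).support) : addNeighbors X v ⊆ addNeighbors X (b i) := by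
  intro w hw
  rw [h.mem_addNeighbors_iff (h.basis_mem i)]
  refine ((h.mem_addNeighbors_iff hv).mp hw).subset (Set.union_subset_union_left _ ?_)
  rw [support_repr_basis_self]
  exact_mod_cast Finset.singleton_subset_iff.mpr hi

theorem adj_iff (h : IsCliqueBasis G b X) {i j : B} :
    G.Adj i j ↔ i ≠ j ∧ b j ∈ addNeighbors X (b i) := by
  rw [h.mem_addNeighbors_iff (h.basis_mem i), support_repr_basis_self,
    support_repr_basis_self, Finset.coe_singleton, Finset.coe_singleton, Set.singleton_union,
    SimpleGraph.isClique_pair]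
  exact ⟨fun hij => ⟨hij.ne, fun _ => hij⟩, fun hij => hij.2 hij.1⟩

theorem span_setOf_addNeighbors (h : IsCliqueBasis G b X) {P : Set V → Prop} (hP : Monotone P) :
    span K {v ∈ X | P (addNeighbors X v)} = span K (b '' {i | P (addNeighbors X (b i))}) := by
  apply le_antisymm
  · refine span_le.mpr fun v hv => b.mem_span_image.mpr fun i hi => ?_
    exact hP (h.addNeighbors_subset hv.1 hi) hv.2
  · refine span_mono ?_
    rintro _ ⟨i, hi, rfl⟩
    exact ⟨h.basis_mem i, hi⟩

theorem nonempty_basis_fiber (h : IsCliqueBasis G b X) (T : Set V) :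
    Nonempty (Basis {i // addNeighbors X (b i) = T} K
      ((span K {v ∈ X | T ⊆ addNeighbors X v}).map
        (span K {v ∈ X | T ⊂ addNeighbors X v}).mkQ)) := by
  have hle : Monotone (T ⊆ ·) := fun _ _ hST hS => hS.trans hST
  have hlt : Monotone (T ⊂ ·) := fun _ _ hST hS => hS.trans_subset hST
  rw [h.span_setOf_addNeighbors hle, h.span_setOf_addNeighbors hlt]
  obtain ⟨c⟩ := nonempty_basis_map_mkQ_span_image b.linearIndependent
    {i | T ⊆ addNeighbors X (b i)} {i | T ⊂ addNeighbors X (b i)}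
  refine ⟨c.reindex (Equiv.subtypeEquivRight fun i => ?_)⟩
  simp only [Set.mem_sdiff, Set.mem_ofPred_eq, ssubset_iff_subset_ne]
  grind

end Nontrivial

theorem exists_equiv_addNeighbors_eq [InvariantBasisNumber K]
    (h : IsCliqueBasis G b X) {B' : Type*} {G' : SimpleGraph B'} {b' : Basis B' K V}
    (h' : IsCliqueBasis G' b' X) :
    ∃ ψ : B ≃ B', ∀ i, addNeighbors X (b' (ψ i)) = addNeighbors X (b i) := by
  have := nontrivial_of_invariantBasisNumber K
  have hfiber (T : Set V) :
      Nonempty ({i // addNeighbors X (b i) = T} ≃ {i // addNeighbors X (b' i) = T}) :=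
    (h.nonempty_basis_fiber T).elim fun c => (h'.nonempty_basis_fiber T).map c.indexEquiv
  let e T := (hfiber T).some
  exact ⟨.ofFiberEquiv e, Equiv.ofFiberEquiv_map e⟩

theorem nonempty_iso [InvariantBasisNumber K] (h : IsCliqueBasis G b X) {B' : Type*}
    {G' : SimpleGraph B'} {b' : Basis B' K V} (h' : IsCliqueBasis G' b' X) :
    Nonempty (G ≃g G') := by
  have := nontrivial_of_invariantBasisNumber K
  obtain ⟨ψ, hψ⟩ := h.exists_equiv_addNeighbors_eq h'
  refine ⟨ψ, fun {i j} => ?_⟩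
  rw [h'.adj_iff, h.adj_iff, ψ.injective.ne_iff, hψ,
    mem_addNeighbors_comm (h.basis_mem i) (h'.basis_mem _), hψ,
    mem_addNeighbors_comm (h.basis_mem j) (h.basis_mem i)]

end IsCliqueBasis

end CliqueBasis

section InfiniteDihedral

open DihedralGroup

/-- The parities of the numbers of letters `sr 0` and `sr 1` in a word for an element of the
infinite dihedral group. -/
def infiniteDihedralParity : DihedralGroup 0 →* Multiplicative (ZMod 2 × ZMod 2) :=
  let c := ZMod.castHom (dvd_zero 2) (ZMod 2)
  { toFun
      | r n => .ofAdd (c n, c n)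
      | sr n => .ofAdd (c n + 1, c n)
    map_one' := congrArg Multiplicative.ofAdd (Prod.ext (map_zero c) (map_zero c))
    map_mul' := by
      have hchar (a b : ZMod 2) : a - b = a + b := CharTwo.sub_eq_add a b
      rintro (m | m) (n | n) <;> refine congrArg Multiplicative.ofAdd (Prod.ext ?_ ?_) <;>
        simp [c, hchar] <;> grind }

theorem mul_self_ne_one_of_infiniteDihedralParity {g : DihedralGroup 0}
    (hg : infiniteDihedralParity g = .ofAdd (1, 1)) : g * g ≠ 1 := by
  intro h
  rcases g with n | n
  · obtain rfl : n = (0 : ℤ) := add_self_eq_zero.mp (r.inj h)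
    exact absurd (congrArg (·.toAdd.1) hg) (by decide)
  · have h₁ : (n.cast : ZMod 2) + 1 = 1 := congrArg (·.toAdd.1) hg
    have h₂ : (n.cast : ZMod 2) = 1 := congrArg (·.toAdd.2) hg
    exact absurd (h₂.symm.trans (add_eq_right.mp h₁)) one_ne_zero

end InfiniteDihedral

section Abelianization

open Module

variable {B W : Type*} [Group W] {M : CoxeterMatrix B} {cs : CoxeterSystem M W}

theorem two_nsmul_abelianization (cs : CoxeterSystem M W)
    (v : Additive (Abelianization W)) : 2 • v = 0 := by
  have h : (powMonoidHom 2 : Abelianization W →* Abelianization W).comp Abelianization.of = 1 :=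
    cs.ext_simple fun i => by
      rw [MonoidHom.comp_apply, powMonoidHom_apply, ← map_pow, cs.simple_sq, map_one,
        MonoidHom.one_apply]
  exact DFunLike.congr_fun (Abelianization.hom_ext _ 1 h) v.toMul

theorem linearMap_ext_simple {R N : Type*} [Semiring R] [AddCommMonoid N] [Module R N]
    [Module R (Additive (Abelianization W))] (cs : CoxeterSystem M W)
    {f g : Additive (Abelianization W) →ₗ[R] N}
    (h : ∀ i, f (.ofMul (.of (cs.simple i))) = g (.ofMul (.of (cs.simple i)))) : f = g := by
  have hcomp : (AddMonoidHom.toMultiplicativeRight f.toAddMonoidHom).comp Abelianization.of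
      = (AddMonoidHom.toMultiplicativeRight g.toAddMonoidHom).comp Abelianization.of :=
    cs.ext_simple h
  exact LinearMap.ext fun v => DFunLike.congr_fun (Abelianization.hom_ext _ _ hcomp) v.toMul

/-- The images in the abelianization of the elements `w` with `w * w = 1`. -/
def involutionClasses (W : Type*) [Group W] : Set (Additive (Abelianization W)) :=
  {v | ∃ w : W, w * w = 1 ∧ .ofMul (.of w) = v}

/-- The graph on the generators of a Coxeter system whose edges are the commuting pairs. -/
def commutingGraph (cs : CoxeterSystem M W) : SimpleGraph B where
  Adj i j := i ≠ j ∧ Commute (cs.simple i) (cs.simple j)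
  symm := ⟨fun _ _ h => ⟨h.1.symm, h.2.symm⟩⟩
  loopless := ⟨fun _ h => h.1 rfl⟩

namespace IsRightAngled

/-- The parities of the numbers of occurrences of the generators in a word. -/
noncomputable def parity (hra : IsRightAngled cs) : W →* Multiplicative (B →₀ ZMod 2) :=
  cs.lift ⟨fun i => .ofAdd (.single i 1), hra.isLiftable
    (fun _ => congrArg Multiplicative.ofAdd (ZModModule.add_self _)) fun _ _ _ => .all _ _⟩

theorem parity_simple (hra : IsRightAngled cs) (i : B) :
    hra.parity (cs.simple i) = .ofAdd (.single i 1) :=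
  cs.lift_apply_simple _ i

theorem exists_infiniteDihedralParity_eq (hra : IsRightAngled cs) {i j : B}
    (h : ¬ Commute (cs.simple i) (cs.simple j)) :
    ∃ φ : W →* DihedralGroup 0, ∀ w,
      infiniteDihedralParity (φ w)
        = .ofAdd ((hra.parity w).toAdd i, (hra.parity w).toAdd j) := by
  classical
  have hij : j ≠ i := by rintro rfl; exact h (.refl _)
  let f : B → DihedralGroup 0 := fun k => if k = i then .sr 0 else if k = j then .sr 1 else 1
  have hf : M.IsLiftable f := by
    refine hra.isLiftable (fun k => ?_) fun k l hkl => ?_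
    · unfold f; split_ifs <;> simp
    · have := mt Commute.symm h
      unfold f; split_ifs <;> simp_all
  refine ⟨cs.lift ⟨f, hf⟩, fun w => ?_⟩
  have hcomp : infiniteDihedralParity.comp (cs.lift ⟨f, hf⟩)
      = (AddMonoidHom.toMultiplicative
        ((Finsupp.applyAddHom i).prod (Finsupp.applyAddHom j))).comp hra.parity := by
    refine cs.ext_simple fun k => ?_
    rw [MonoidHom.comp_apply, MonoidHom.comp_apply, cs.lift_apply_simple, parity_simple]
    unfold f
    split_ifs with hki hkj
    · subst hki
      exact congrArg Multiplicative.ofAdd (Prod.ext (by simp) (by simp [hij]))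
    · subst hkj
      exact congrArg Multiplicative.ofAdd (Prod.ext (by simp [hki, CharTwo.add_self_eq_zero])
        (by simp))
    · rw [map_one]
      exact congrArg Multiplicative.ofAdd (Prod.ext (by simp [hki]) (by simp [hkj]))
  exact DFunLike.congr_fun hcomp w

theorem isClique_support_parity (hra : IsRightAngled cs) {w : W} (hw : w * w = 1) :
    (commutingGraph cs).IsClique ((hra.parity w).toAdd.support : Set B) := by
  intro i hi j hj hij
  refine ⟨hij, by_contra fun hcomm => ?_⟩
  obtain ⟨φ, hφ⟩ := hra.exists_infiniteDihedralParity_eq hcomm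
  have hone {k : B} (hk : k ∈ ((hra.parity w).toAdd.support : Set B)) :
      (hra.parity w).toAdd k = 1 :=
    Fin.eq_one_of_ne_zero _ (Finsupp.mem_support_iff.mp hk)
  refine mul_self_ne_one_of_infiniteDihedralParity (g := φ w) ?_ ?_
  · rw [hφ, hone hi, hone hj]
  · rw [← map_mul, hw, map_one]

theorem exists_mul_self_eq_one_of_isClique (hra : IsRightAngled cs) {v : B →₀ ZMod 2}
    (hv : (commutingGraph cs).IsClique (v.support : Set B)) :
    ∃ w, w * w = 1 ∧ (hra.parity w).toAdd = v := by
  have hcomm : (v.support : Set B).Pairwise (Function.onFun Commute cs.simple) :=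
    fun i hi j hj hij => (hv hi hj hij).2
  refine ⟨v.support.noncommProd cs.simple hcomm, ?_, ?_⟩
  · rw [← Finset.noncommProd_mul_distrib cs.simple cs.simple hcomm hcomm hcomm]
    exact (Finset.noncommProd_eq_pow_card _ _ _ 1 fun i _ => cs.simple_mul_simple_self i).trans
      (one_pow _)
  · rw [Finset.map_noncommProd, Finset.noncommProd_eq_prod, toAdd_prod]
    refine (Finset.sum_congr rfl fun i hi => ?_).trans v.sum_single
    have hvi : v i = 1 := Fin.eq_one_of_ne_zero _ (Finsupp.mem_support_iff.mp hi)
    rw [parity_simple, toAdd_ofAdd, hvi]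

variable [Module (ZMod 2) (Additive (Abelianization W))]

/-- The classes of the generators, as an `𝔽₂`-basis of the abelianization. -/
noncomputable def abelianizationBasis (hra : IsRightAngled cs) :
    Basis B (ZMod 2) (Additive (Abelianization W)) :=
  .ofRepr <| .ofLinearMap
    (AddMonoidHom.toZModLinearMap 2 (MonoidHom.toAdditiveLeft (Abelianization.lift hra.parity)))
    (Finsupp.linearCombination (ZMod 2) fun i => .ofMul (.of (cs.simple i)))
    (by
      refine Finsupp.lhom_ext' fun i => LinearMap.ext_ring ?_
      simp [parity_simple])
    (linearMap_ext_simple cs fun i => by simp [parity_simple])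

theorem abelianizationBasis_repr_of (hra : IsRightAngled cs) (w : W) :
    hra.abelianizationBasis.repr (.ofMul (.of w)) = (hra.parity w).toAdd :=
  rfl

theorem isCliqueBasis_abelianizationBasis (hra : IsRightAngled cs) :
    IsCliqueBasis (commutingGraph cs) hra.abelianizationBasis (involutionClasses W) := by
  intro v
  constructor
  · rintro ⟨w, hw, rfl⟩
    rw [abelianizationBasis_repr_of]
    exact hra.isClique_support_parity hw
  · intro hv
    obtain ⟨w, hw, hwv⟩ := hra.exists_mul_self_eq_one_of_isClique hv
    refine ⟨w, hw, hra.abelianizationBasis.repr.injective ?_⟩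
    rw [abelianizationBasis_repr_of, hwv]

end IsRightAngled

end Abelianization

theorem rightAngled_rigid_general {B W : Type*} [Group W] {M : CoxeterMatrix B}
    {cs : CoxeterSystem M W} (hra : IsRightAngled cs) {B' : Type*} {M' : CoxeterMatrix B'}
    (cs' : CoxeterSystem M' W) :
    ∃ ψ : B ≃ B', ∀ i j : B, orderOf (cs.simple i * cs.simple j)
      = orderOf (cs'.simple (ψ i) * cs'.simple (ψ j)) := by
  let : Module (ZMod 2) (Additive (Abelianization W)) :=
    AddCommGroup.zmodModule (two_nsmul_abelianization cs)
  have hra' : IsRightAngled cs' := hra.of_coxeterSystem cs'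
  obtain ⟨ψ⟩ := hra.isCliqueBasis_abelianizationBasis.nonempty_iso
    hra'.isCliqueBasis_abelianizationBasis
  refine ⟨ψ.toEquiv, fun i j => ?_⟩
  obtain rfl | hij := eq_or_ne i j
  · simp
  have hψij : ψ i ≠ ψ j := ψ.injective.ne hij
  have hcomm : Commute (cs'.simple (ψ i)) (cs'.simple (ψ j))
      ↔ Commute (cs.simple i) (cs.simple j) :=
    (and_iff_right hψij).symm.trans (ψ.map_adj_iff.trans (and_iff_right hij))
  classical
  exact (hra.orderOf_simple_mul_simple hij).trans <|
    (if_congr hcomm.symm rfl rfl).trans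
      (hra'.orderOf_simple_mul_simple hψij).symm

/-- **Theorem (Radcliffe).** If `(W,S)` is a right-angled Coxeter system, i.e.
`m(s,t) ∈ {2, ∞}` for all `s ≠ t` in `S`, then `W` is rigid: for every Coxeter
generating set `S'` of `W` there is a bijection `ψ : S → S'` with
`m(s,t) = m'(ψ s, ψ t)` for all `s, t ∈ S`.
(Here `orderOf x = 0` encodes infinite order.) -/
theorem rightAngled_rigid {B : Type*} [Fintype B] {W : Type*} [Group W]
    {M : CoxeterMatrix B} (cs : CoxeterSystem M W)
    (hra : ∀ i j : B, i ≠ j → orderOf (cs.simple i * cs.simple j) = 2 ∨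
      orderOf (cs.simple i * cs.simple j) = 0) :
    ∀ (B' : Type*) [Fintype B'] (M' : CoxeterMatrix B') (cs' : CoxeterSystem M' W),
      ∃ ψ : B ≃ B', ∀ i j : B,
        orderOf (cs.simple i * cs.simple j)
          = orderOf (cs'.simple (ψ i) * cs'.simple (ψ j)) :=
  fun _ _ _ cs' => rightAngled_rigid_general hra cs'
end
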